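/- Suppose 𝔼[z(0)] < ∞. Then ℙ-almost surely, P^ω₀(X_t = 0) = ((4π)^{−(d+1)/2} 𝔼[z(0)]^{−1/2} + o(1)) t^{−(1+d)/2} as t → ∞. -/

import Mathlib

open MeasureTheory ProbabilityTheory Filter Set

noncomputable section

/-- `n`-step transition probabilities of the discrete-time simple random walk on `ℤ^m`. -/
def srwKernel (m : ℕ) : ℕ → (Fin m → ℤ) → (Fin m → ℤ) → ℝ
  | 0, x, y => if x = y then 1 else 0
  | n + 1, x, y =>
      (∑ i : Fin m, (srwKernel m n (Function.update x i (x i + 1)) y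
        + srwKernel m n (Function.update x i (x i - 1)) y)) / (2 * m)

/-- Transition kernel of the continuous-time simple random walk on `ℤ^m` which jumps to
each of its `2m` nearest neighbours at rate `1` (total jump rate `2m`). -/
def heatKernel (m : ℕ) (t : ℝ) (x y : Fin m → ℤ) : ℝ :=
  ∑' n : ℕ, Real.exp (-(2 * m) * t) * ((2 * m) * t) ^ n / n.factorial * srwKernel m n x y

/-- `(P, S)` is (a realization of) the continuous-time simple random walk on `ℤ^m`:
under `P x` the process `S` starts at `x`, has right-continuous (piecewise constant)
paths, and its finite-dimensional distributions are given by the heat kernel. -/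
structure IsCTSRW (m : ℕ) {Ω : Type*} [MeasurableSpace Ω]
    (P : (Fin m → ℤ) → Measure Ω) (S : ℝ → Ω → (Fin m → ℤ)) : Prop where
  prob : ∀ x, IsProbabilityMeasure (P x)
  meas : Measurable fun p : ℝ × Ω => S p.1 p.2
  start : ∀ x, ∀ᵐ ω ∂ P x, S 0 ω = x
  rightCont : ∀ x, ∀ᵐ ω ∂ P x, ∀ t : ℝ, 0 ≤ t →
    ∃ ε > (0 : ℝ), ∀ u, t ≤ u → u < t + ε → S u ω = S t ω
  fdd : ∀ x (n : ℕ) (t : Fin (n + 1) → ℝ), 0 ≤ t 0 →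
    (∀ i : Fin n, t i.castSucc ≤ t i.succ) →
    ∀ y : Fin (n + 1) → (Fin m → ℤ),
      (P x {ω | ∀ i, S (t i) ω = y i}).toReal
        = heatKernel m (t 0) x (y 0)
          * ∏ i : Fin n, heatKernel m (t i.succ - t i.castSucc) (y i.castSucc) (y i.succ)

/-- `z` is an i.i.d. nonnegative random scenery on `ℤ^d` whose common upper tail decays
like `r^{-α+o(1)}`. -/
structure IsScenery (d : ℕ) (α : ℝ) {Ω : Type*} [MeasurableSpace Ω]
    (μ : Measure Ω) (z : (Fin d → ℤ) → Ω → ℝ) : Prop where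
  prob : IsProbabilityMeasure μ
  meas : ∀ x, Measurable (z x)
  nonneg : ∀ x ω, 0 ≤ z x ω
  indep : iIndepFun z μ
  ident : ∀ x, IdentDistrib (z x) (z 0) μ μ
  tail : Tendsto (fun r : ℝ => Real.log (μ {ω | r < z 0 ω}).toReal / Real.log r)
    atTop (nhds (-α))

/-- The random walk in random scenery `A(t) = ∫₀ᵗ z(S_u) du`. -/
def rwrs {Ωz Ωw : Type*} (d : ℕ) (z : (Fin d → ℤ) → Ωz → ℝ)
    (S : ℝ → Ωw → (Fin d → ℤ)) (t : ℝ) (ζ : Ωz) (ω : Ωw) : ℝ :=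
  ∫ u in Set.Ioc (0 : ℝ) t, z (S u ω) ζ

end
open MeasureTheory ProbabilityTheory Filter Set

noncomputable section

/-- The clock process `A²(t) = ∫₀ᵗ z(S²_u) du`, where `S²` is the second (ℤ^d-valued)
component of the walk on `ℤ^{1+d}`. -/
def clock (d : ℕ) {Ωz Ωw : Type*} (z : (Fin d → ℤ) → Ωz → ℝ)
    (S : ℝ → Ωw → (Fin (d + 1) → ℤ)) (t : ℝ) (ζ : Ωz) (ω : Ωw) : ℝ :=
  ∫ u in Set.Ioc (0 : ℝ) t, z (fun i => S u ω i.succ) ζ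

/-- The variable-speed random walk `X_t = (S¹_{A²(t)}, S²_t)` in the layered conductance
field `ω(x, x±e₁) = z(x₂)`, `ω(x, x±e_i) = 1` for `i ≥ 2` (coordinate `0` of the walk on
`ℤ^{1+d}` is the ℤ-coordinate, coordinates `1,…,d` form the ℤ^d-coordinate). -/
def layeredWalk (d : ℕ) {Ωz Ωw : Type*} (z : (Fin d → ℤ) → Ωz → ℝ)
    (S : ℝ → Ωw → (Fin (d + 1) → ℤ)) (t : ℝ) (ζ : Ωz) (ω : Ωw) : ℤ × (Fin d → ℤ) :=
  (S (clock d z S t ζ ω) ω 0, fun i => S t ω i.succ)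

/-- Euclidean norm of a point of `ℤ^{1+d} = ℤ × ℤ^d`. -/
def euclNormProd (d : ℕ) (x : ℤ × (Fin d → ℤ)) : ℝ :=
  Real.sqrt ((x.1 : ℝ) ^ 2 + ∑ i, (x.2 i : ℝ) ^ 2)

end


open MeasureTheory ProbabilityTheory Filter Set

/-- Normalised Lebesgue measure on `(-π, π]`. -/
noncomputable def nuF : Measure ℝ :=
  (ENNReal.ofReal (1 / (2 * Real.pi))) • volume.restrict (Ioc (-Real.pi) Real.pi)

instance nuF_prob : IsProbabilityMeasure nuF := by
  constructor
  have hp := Real.pi_pos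
  simp only [nuF, Measure.smul_apply, Measure.restrict_apply_univ, Real.volume_Ioc, smul_eq_mul]
  rw [← ENNReal.ofReal_mul (by positivity)]
  rw [show 1 / (2 * Real.pi) * (Real.pi - -Real.pi) = 1 by field_simp; ring]
  simp

lemma integral_nuF (f : ℝ → ℝ) :
    ∫ θ, f θ ∂nuF = 1 / (2 * Real.pi) * ∫ θ in (-Real.pi)..Real.pi, f θ := by
  have hp := Real.pi_pos
  rw [nuF, integral_smul_measure, intervalIntegral.integral_of_le (by linarith)]
  rw [ENNReal.toReal_ofReal (by positivity)]
  simp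

/-- One-dimensional continuous-time heat kernel, in Fourier form. -/
noncomputable def kk (t : ℝ) (a : ℤ) : ℝ :=
  ∫ θ, Real.cos (a * θ) * Real.exp (-(2 * t * (1 - Real.cos θ))) ∂nuF

lemma integral_cos_nuF (a : ℤ) : ∫ θ, Real.cos (a * θ) ∂nuF = if a = 0 then 1 else 0 := by
  split_ifs with h
  · simp [h]
  · rw [integral_nuF]
    have : (a : ℝ) ≠ 0 := by exact_mod_cast h
    rw [intervalIntegral.integral_comp_mul_left (fun x => Real.cos x) this]
    simp [Real.sin_int_mul_pi]

lemma integrable_of_bdd_cont {m : ℕ} {f : (Fin m → ℝ) → ℝ} (hf : Continuous f) (C : ℝ)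
    (hC : ∀ x, |f x| ≤ C) : Integrable f (Measure.pi (fun _ : Fin m => nuF)) :=
  Integrable.of_bound hf.aestronglyMeasurable C (Eventually.of_forall hC)

lemma abs_prod_cos_le {m : ℕ} (a : Fin m → ℝ) : |∏ i, Real.cos (a i)| ≤ 1 := by
  rw [Finset.abs_prod]
  exact Finset.prod_le_one (fun _ _ => abs_nonneg _) (fun _ _ => Real.abs_cos_le_one _)

lemma abs_sum_cos_div_le {m : ℕ} (hm : 1 ≤ m) (a : Fin m → ℝ) :
    |(∑ i, Real.cos (a i)) / m| ≤ 1 := by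
  have : (0 : ℝ) < m := by exact_mod_cast hm
  rw [abs_div, abs_of_pos this, div_le_one this]
  refine (Finset.abs_sum_le_sum_abs _ _).trans ?_
  refine (Finset.sum_le_sum (fun i _ => Real.abs_cos_le_one _)).trans ?_
  simp

lemma srw_fourier {m : ℕ} (hm : 1 ≤ m) (n : ℕ) (x y : Fin m → ℤ) :
    srwKernel m n x y = ∫ θ : Fin m → ℝ, (∏ i, Real.cos (((x i - y i : ℤ) : ℝ) * θ i)) *
      ((∑ i, Real.cos (θ i)) / m) ^ n ∂Measure.pi (fun _ : Fin m => nuF) := by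
  have hm0 : (m : ℝ) ≠ 0 := by positivity
  have hint : ∀ n (x : Fin m → ℤ), Integrable (fun θ : Fin m → ℝ =>
      (∏ i, Real.cos (((x i - y i : ℤ) : ℝ) * θ i)) *
      ((∑ i, Real.cos (θ i)) / m) ^ n) (Measure.pi (fun _ : Fin m => nuF)) := by
    intro n x
    refine integrable_of_bdd_cont (by fun_prop) 1 ?_
    intro θ
    rw [abs_mul, abs_pow]
    exact mul_le_one₀ (abs_prod_cos_le _) (by positivity)
      (pow_le_one₀ (abs_nonneg _) (abs_sum_cos_div_le hm _))
  induction n generalizing x with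
  | zero =>
    simp only [pow_zero, mul_one, srwKernel]
    rw [integral_fintype_prod_eq_prod (f := fun i (t : ℝ) => Real.cos (((x i - y i : ℤ) : ℝ) * t))]
    simp only [integral_cos_nuF]
    split_ifs with h
    · subst h; simp
    · obtain ⟨i, hi⟩ := Function.ne_iff.mp h
      symm
      apply Finset.prod_eq_zero (Finset.mem_univ i)
      rw [if_neg (by omega)]
  | succ n ih =>
    simp only [srwKernel, ih]
    rw [eq_comm]
    have hupd : ∀ i : Fin m, ∀ θ : Fin m → ℝ,
        (∏ j, Real.cos (((Function.update x i (x i + 1) j - y j : ℤ) : ℝ) * θ j)) *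
          ((∑ i, Real.cos (θ i)) / m) ^ n
        + (∏ j, Real.cos (((Function.update x i (x i - 1) j - y j : ℤ) : ℝ) * θ j)) *
          ((∑ i, Real.cos (θ i)) / m) ^ n
        = 2 * Real.cos (θ i) * ((∏ j, Real.cos (((x j - y j : ℤ) : ℝ) * θ j)) *
          ((∑ i, Real.cos (θ i)) / m) ^ n) := by
      intro i θ
      have key : ∀ b : ℤ, (∏ j, Real.cos (((Function.update x i b j - y j : ℤ) : ℝ) * θ j))
        = Real.cos (((b - y i : ℤ) : ℝ) * θ i) *
          ∏ j ∈ Finset.univ.erase i, Real.cos (((x j - y j : ℤ) : ℝ) * θ j) := by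
        intro b
        rw [← Finset.mul_prod_erase _ _ (Finset.mem_univ i)]
        congr 1
        · simp
        · apply Finset.prod_congr rfl
          intro j hj
          rw [Function.update_of_ne (Finset.ne_of_mem_erase hj)]
      rw [key, key, ← Finset.mul_prod_erase _ _ (Finset.mem_univ i)]
      have h2 : Real.cos (((x i + 1 - y i : ℤ) : ℝ) * θ i) + Real.cos (((x i - 1 - y i : ℤ) : ℝ) * θ i)
        = 2 * Real.cos (θ i) * Real.cos (((x i - y i : ℤ) : ℝ) * θ i) := by
        push_cast
        rw [show ((x i : ℝ) + 1 - y i) * θ i = (x i - y i) * θ i + θ i by ring,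
          show ((x i : ℝ) - 1 - y i) * θ i = (x i - y i) * θ i - θ i by ring,
          Real.cos_add, Real.cos_sub]
        ring
      rw [← add_mul, ← add_mul, h2]
      ring
    have h3 : ∀ i : Fin m, (∫ θ : Fin m → ℝ,
        (∏ j, Real.cos (((Function.update x i (x i + 1) j - y j : ℤ) : ℝ) * θ j)) *
          ((∑ i, Real.cos (θ i)) / m) ^ n ∂Measure.pi (fun _ : Fin m => nuF))
        + (∫ θ : Fin m → ℝ, (∏ j, Real.cos (((Function.update x i (x i - 1) j - y j : ℤ) : ℝ) * θ j)) *
          ((∑ i, Real.cos (θ i)) / m) ^ n ∂Measure.pi (fun _ : Fin m => nuF))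
        = ∫ θ : Fin m → ℝ, 2 * Real.cos (θ i) * ((∏ j, Real.cos (((x j - y j : ℤ) : ℝ) * θ j)) *
          ((∑ i, Real.cos (θ i)) / m) ^ n) ∂Measure.pi (fun _ : Fin m => nuF) := by
      intro i
      rw [← integral_add (hint _ _) (hint _ _)]
      exact integral_congr_ae (Eventually.of_forall (hupd i))
    simp only [h3]
    rw [← integral_finsetSum, ← integral_div]
    · apply integral_congr_ae (Eventually.of_forall _)
      intro θ
      rw [← Finset.sum_mul, ← Finset.mul_sum, pow_succ]
      field_simp
    · intro i _
      have := (hint n (Function.update x i (x i + 1))).add (hint n (Function.update x i (x i - 1)))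
      exact this.congr (Eventually.of_forall (by intro θ; simp only [Pi.add_apply]; exact hupd i θ))

lemma heat_eq_prod {m : ℕ} (hm : 1 ≤ m) (t : ℝ) (x y : Fin m → ℤ) :
    heatKernel m t x y = ∏ i, kk t (x i - y i) := by
  have hm0 : (m : ℝ) ≠ 0 := by positivity
  unfold heatKernel
  simp only [srw_fourier hm]
  set c : (Fin m → ℝ) → ℝ := fun θ => ∏ i, Real.cos (((x i - y i : ℤ) : ℝ) * θ i) with hc
  set s : (Fin m → ℝ) → ℝ := fun θ => (∑ i, Real.cos (θ i)) / m with hs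
  have hbd : ∀ n θ, ‖Real.exp (-(2 * m) * t) * ((2 * m) * t) ^ n / n.factorial * (c θ * s θ ^ n)‖
      ≤ Real.exp (-(2 * m) * t) * (|(2 * m) * t| ^ n / n.factorial) := by
    intro n θ
    rw [norm_mul, norm_mul, Real.norm_eq_abs, Real.norm_eq_abs, Real.norm_eq_abs, abs_div, abs_mul,
      abs_pow, abs_pow, Real.abs_exp, Nat.abs_cast, mul_div_assoc]
    refine mul_le_of_le_one_right (by positivity) ?_
    exact mul_le_one₀ (abs_prod_cos_le _) (by positivity)
      (pow_le_one₀ (abs_nonneg _) (abs_sum_cos_div_le hm _))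
  have hI : ∀ n, Integrable (fun θ => Real.exp (-(2 * m) * t) * ((2 * m) * t) ^ n / n.factorial *
      (c θ * s θ ^ n)) (Measure.pi (fun _ : Fin m => nuF)) := by
    intro n
    exact integrable_of_bdd_cont (by simp only [hc, hs]; fun_prop) _ (hbd n)
  have hsum := hasSum_integral_of_summable_integral_norm hI (by
    refine Summable.of_nonneg_of_le (fun n => by positivity) (fun n => ?_)
      ((Real.summable_pow_div_factorial |(2 * m) * t|).mul_left (Real.exp (-(2 * m) * t)))
    refine (integral_mono (hI n).norm (integrable_const _) (hbd n)).trans ?_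
    simp)
  have e1 : ∀ n, ∫ θ, Real.exp (-(2 * m) * t) * ((2 * m) * t) ^ n / n.factorial *
      (c θ * s θ ^ n) ∂(Measure.pi (fun _ : Fin m => nuF)) = Real.exp (-(2 * m) * t) * ((2 * m) * t) ^ n / n.factorial * ∫ θ, (c θ * s θ ^ n) ∂(Measure.pi (fun _ : Fin m => nuF)) := by
    intro n
    rw [integral_const_mul]
  simp only [e1] at hsum
  rw [hsum.tsum_eq]
  unfold kk
  rw [← integral_fintype_prod_eq_prod (f := fun i (θ : ℝ) => Real.cos (((x i - y i : ℤ) : ℝ) * θ) *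
    Real.exp (-(2 * t * (1 - Real.cos θ))))]
  apply integral_congr_ae (Eventually.of_forall _)
  intro θ
  simp only [Finset.prod_mul_distrib, ← Real.exp_sum]
  have h := (NormedSpace.expSeries_div_hasSum_exp (𝔸 := ℝ) (2 * m * t * s θ))
  have h2 := (h.mul_left (Real.exp (-(2 * m) * t) * c θ)).tsum_eq
  rw [← Real.exp_eq_exp_ℝ] at h2
  rw [show (∑' n : ℕ, Real.exp (-(2 * m) * t) * ((2 * m) * t) ^ n / n.factorial * (c θ * s θ ^ n)) = ∑' n : ℕ, Real.exp (-(2 * m) * t) * c θ * ((2 * m * t * s θ) ^ n / n.factorial) from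
    tsum_congr (fun n => by rw [mul_pow _ (s θ)]; ring), h2, mul_comm (Real.exp _), mul_assoc, ← Real.exp_add]
  congr 2
  simp only [hs, Finset.sum_neg_distrib, ← Finset.mul_sum, Finset.sum_sub_distrib]
  simp
  field_simp
  ring

open MeasureTheory ProbabilityTheory Filter Set

lemma integrable_nuF {f : ℝ → ℝ} (hf : Continuous f) : Integrable f nuF := by
  unfold nuF
  refine Integrable.smul_measure ?_ ENNReal.ofReal_ne_top
  exact (hf.integrableOn_Icc).mono_set Ioc_subset_Icc_self

lemma kk_neg (t : ℝ) (a : ℤ) : kk t (-a) = kk t a := by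
  unfold kk; simp

lemma kk_zero (a : ℤ) : kk 0 a = if a = 0 then 1 else 0 := by
  rw [← integral_cos_nuF]; simp [kk]

lemma kk_eq_heat (t : ℝ) (a : ℤ) : kk t a = heatKernel 1 t (fun _ => a) 0 := by
  rw [heat_eq_prod le_rfl]; simp

lemma srw_nonneg (m n : ℕ) (x y : Fin m → ℤ) : 0 ≤ srwKernel m n x y := by
  induction n generalizing x with
  | zero => simp only [srwKernel]; split_ifs <;> norm_num
  | succ n ih =>
    simp only [srwKernel]
    exact div_nonneg (Finset.sum_nonneg fun i _ => add_nonneg (ih _) (ih _)) (by positivity)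

lemma heat_nonneg (m : ℕ) {t : ℝ} (ht : 0 ≤ t) (x y : Fin m → ℤ) : 0 ≤ heatKernel m t x y :=
  tsum_nonneg fun n => mul_nonneg (by positivity) (srw_nonneg m n x y)

lemma kk_nonneg {t : ℝ} (ht : 0 ≤ t) (a : ℤ) : 0 ≤ kk t a := by
  rw [kk_eq_heat]; exact heat_nonneg _ ht _ _

lemma kk_le_diag (t : ℝ) (a : ℤ) : kk t a ≤ kk t 0 := by
  unfold kk
  refine integral_mono (integrable_nuF (by fun_prop)) (integrable_nuF (by fun_prop)) ?_
  intro θ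
  refine mul_le_mul_of_nonneg_right ?_ (Real.exp_pos _).le
  simpa using Real.cos_le_one _

lemma kk_anti {s t : ℝ} (hst : s ≤ t) : kk t 0 ≤ kk s 0 := by
  unfold kk
  refine integral_mono (integrable_nuF (by fun_prop)) (integrable_nuF (by fun_prop)) ?_
  intro θ
  refine mul_le_mul_of_nonneg_left ?_ (by simp)
  refine Real.exp_le_exp.mpr ?_
  nlinarith [Real.cos_le_one θ]

lemma kk_le_one {t : ℝ} (ht : 0 ≤ t) (a : ℤ) : kk t a ≤ 1 :=
  (kk_le_diag t a).trans ((kk_anti ht).trans (by simp [kk_zero]))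

lemma kk_tendsto {u : ℕ → ℝ} {l : ℝ} (hu : ∀ n, 0 ≤ u n) (h : Tendsto u atTop (nhds l)) (a : ℤ) :
    Tendsto (fun n => kk (u n) a) atTop (nhds (kk l a)) := by
  unfold kk
  refine tendsto_integral_of_dominated_convergence (fun _ => 1) ?_ (integrable_const _) ?_ ?_
  · intro n; exact Continuous.aestronglyMeasurable (by fun_prop)
  · intro n
    refine Eventually.of_forall fun θ => ?_
    rw [norm_mul, Real.norm_eq_abs, Real.norm_eq_abs, Real.abs_exp]
    refine mul_le_one₀ (Real.abs_cos_le_one _) (Real.exp_pos _).le ?_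
    rw [Real.exp_le_one_iff]
    have := hu n
    have := Real.cos_le_one θ
    have : 0 ≤ 2 * u n * (1 - Real.cos θ) := by
      apply mul_nonneg (by positivity); linarith
    linarith
  · refine Eventually.of_forall fun θ => ?_
    refine Tendsto.const_mul _ ?_
    have : Continuous fun x : ℝ => Real.exp (-(2 * x * (1 - Real.cos θ))) := by fun_prop
    exact (this.tendsto l).comp h

lemma kk_measurable (a : ℤ) : Measurable (fun t => kk t a) := by
  unfold kk
  have : StronglyMeasurable (fun p : ℝ × ℝ =>
      Real.cos (a * p.2) * Real.exp (-(2 * p.1 * (1 - Real.cos p.2)))) :=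
    Continuous.stronglyMeasurable (by fun_prop)
  exact this.integral_prod_right.measurable

lemma one_sub_cos_lower {x : ℝ} (hx : |x| ≤ Real.pi) : 2 / Real.pi ^ 2 * x ^ 2 ≤ 1 - Real.cos x := by
  have := Real.cos_le_one_sub_mul_cos_sq hx
  linarith

open MeasureTheory ProbabilityTheory Filter Set

lemma scaled_cos_limit (φ : ℝ) :
    Tendsto (fun t : ℝ => 2 * t * (1 - Real.cos (φ / √t))) atTop (nhds (φ ^ 2)) := by
  have h1 : Tendsto (fun t : ℝ => φ ^ 2 * Real.sinc (φ / √t / 2) ^ 2) atTop (nhds (φ ^ 2)) := by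
    have : Tendsto (fun t : ℝ => φ / √t / 2) atTop (nhds 0) := by
      have h := (tendsto_const_nhds (x := φ)).div_atTop Real.tendsto_sqrt_atTop
      simpa using h.div_const 2
    have h2 := (Real.continuous_sinc.tendsto 0).comp this
    have h3 := (h2.pow 2).const_mul (φ ^ 2)
    simpa using h3
  refine h1.congr' ?_
  filter_upwards [eventually_gt_atTop 0] with t ht
  have hs : √t ≠ 0 := (Real.sqrt_pos.mpr ht).ne'
  have hst : √t ^ 2 = t := Real.sq_sqrt ht.le
  by_cases hφ : φ = 0
  · simp [hφ]
  · have hx : φ / √t / 2 ≠ 0 := by positivity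
    rw [Real.sinc_of_ne_zero hx]
    have hc : Real.cos (φ / √t) = 1 - 2 * Real.sin (φ / √t / 2) ^ 2 := by
      have := Real.cos_two_mul (φ / √t / 2)
      rw [show 2 * (φ / √t / 2) = φ / √t by ring] at this
      rw [this]
      have := Real.sin_sq_add_cos_sq (φ / √t / 2)
      linarith
    rw [hc]
    field_simp
    rw [hst]; ring

lemma kk_asymp : Tendsto (fun t : ℝ => √t * kk t 0) atTop (nhds ((4 * Real.pi) ^ (-(1 / 2) : ℝ))) := by
  have hp := Real.pi_pos
  have h1 : Tendsto (fun t : ℝ => ∫ φ, (Ioc (-Real.pi * √t) (Real.pi * √t)).indicator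
      (fun φ => Real.exp (-(2 * t * (1 - Real.cos (φ / √t))))) φ) atTop
      (nhds (∫ φ, Real.exp (-1 * φ ^ 2))) := by
    refine tendsto_integral_filter_of_dominated_convergence
      (fun φ => Real.exp (-(4 / Real.pi ^ 2) * φ ^ 2)) ?_ ?_ ?_ ?_
    · refine Eventually.of_forall fun t => ?_
      refine (Continuous.aestronglyMeasurable (by fun_prop)).indicator measurableSet_Ioc
    · filter_upwards [eventually_gt_atTop 0] with t ht
      refine Eventually.of_forall fun φ => ?_
      by_cases hφ : φ ∈ Ioc (-Real.pi * √t) (Real.pi * √t)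
      · rw [indicator_of_mem hφ, Real.norm_eq_abs, Real.abs_exp]
        refine Real.exp_le_exp.mpr ?_
        have hs : 0 < √t := Real.sqrt_pos.mpr ht
        have hst : √t ^ 2 = t := Real.sq_sqrt ht.le
        have := one_sub_cos_lower (x := φ / √t) (by
          rw [abs_div, abs_of_pos hs, div_le_iff₀ hs, abs_le]
          exact ⟨by linarith [hφ.1], hφ.2⟩)
        have h2 := mul_le_mul_of_nonneg_left this (show 0 ≤ 2 * t by positivity)
        have h3 : 2 * t * (2 / Real.pi ^ 2 * (φ / √t) ^ 2) = 4 / Real.pi ^ 2 * φ ^ 2 := by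
          rw [div_pow, hst]; field_simp; ring
        linarith
      · rw [indicator_of_notMem hφ]; simpa using (Real.exp_pos _).le
    · exact integrable_exp_neg_mul_sq (by positivity)
    · refine Eventually.of_forall fun φ => ?_
      have h2 : Tendsto (fun t : ℝ => Real.exp (-(2 * t * (1 - Real.cos (φ / √t))))) atTop
          (nhds (Real.exp (-1 * φ ^ 2))) := by
        refine (Real.continuous_exp.tendsto _).comp ?_
        simpa using (scaled_cos_limit φ).neg
      refine h2.congr' ?_
      have h3 : ∀ᶠ t : ℝ in atTop, |φ| / Real.pi < √t :=
        Real.tendsto_sqrt_atTop.eventually_gt_atTop _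
      filter_upwards [h3] with t ht
      rw [indicator_of_mem]
      rw [div_lt_iff₀ hp] at ht
      have := abs_lt.mp ht
      constructor <;> linarith [this.1, this.2]
  rw [integral_gaussian] at h1
  have h2 := h1.const_mul (1 / (2 * Real.pi))
  have e : 1 / (2 * Real.pi) * √(Real.pi / 1) = (4 * Real.pi) ^ (-(1 / 2) : ℝ) := by
    rw [Real.rpow_neg (by positivity), ← Real.sqrt_eq_rpow, div_one,
      show (4 : ℝ) * Real.pi = 2 ^ 2 * Real.pi by ring, Real.sqrt_mul (by positivity),
      Real.sqrt_sq (by norm_num)]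
    have : √Real.pi ≠ 0 := (Real.sqrt_pos.mpr hp).ne'
    have h4 : √Real.pi ^ 2 = Real.pi := Real.sq_sqrt hp.le
    field_simp
    exact h4
  rw [e] at h2
  refine h2.congr' ?_
  filter_upwards [eventually_gt_atTop 0] with t ht
  have hs : 0 < √t := Real.sqrt_pos.mpr ht
  rw [integral_indicator measurableSet_Ioc, ← intervalIntegral.integral_of_le (by nlinarith),
    intervalIntegral.integral_comp_div
      (fun x => Real.exp (-(2 * t * (1 - Real.cos x)))) hs.ne']
  unfold kk
  rw [integral_nuF]
  rw [mul_div_assoc, mul_div_assoc, div_self hs.ne']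
  simp
  ring

lemma kk_bound : ∃ C : ℝ, 0 < C ∧ ∀ j : ℕ, kk (j + 1) 0 ≤ C / √(j + 1) := by
  have h := kk_asymp.comp (tendsto_natCast_atTop_atTop.comp (tendsto_add_atTop_nat 1))
  obtain ⟨C, hC⟩ := h.bddAbove_range
  refine ⟨max C 1, by positivity, fun j => ?_⟩
  have h1 := hC (mem_range_self j)
  simp only [Function.comp, Nat.cast_add, Nat.cast_one] at h1
  rw [le_div_iff₀ (by positivity), mul_comm]
  exact h1.trans (le_max_left _ _)

lemma srw_hasSum {m : ℕ} (hm : 1 ≤ m) (n : ℕ) (x : Fin m → ℤ) :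
    HasSum (fun y => srwKernel m n x y) 1 := by
  induction n generalizing x with
  | zero =>
    simp only [srwKernel]
    have := hasSum_ite_eq x (1 : ℝ)
    simpa [eq_comm] using this
  | succ n ih =>
    simp only [srwKernel]
    have h := (hasSum_sum (s := Finset.univ) (fun i (_ : i ∈ Finset.univ) =>
      (ih (Function.update x i (x i + 1))).add (ih (Function.update x i (x i - 1))))).div_const
        (2 * (m : ℝ))
    have hm0 : (m : ℝ) ≠ 0 := by positivity
    have e : (∑ i : Fin m, ((1 : ℝ) + 1)) / (2 * (m : ℝ)) = 1 := by
      simp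
      field_simp
      norm_num
    rw [e] at h
    exact h

lemma heat_summable_series (m : ℕ) (hm : 1 ≤ m) (t : ℝ) (ht : 0 ≤ t) (x y : Fin m → ℤ) :
    Summable fun n : ℕ => Real.exp (-(2 * m) * t) * ((2 * m) * t) ^ n / n.factorial
      * srwKernel m n x y := by
  have h1 : ∀ n, srwKernel m n x y ≤ 1 := fun n =>
    le_hasSum (srw_hasSum hm n x) y (fun _ _ => srw_nonneg _ _ _ _)
  refine Summable.of_nonneg_of_le (fun n => mul_nonneg (by positivity) (srw_nonneg m n x y))
    (fun n => mul_le_of_le_one_right (by positivity) (h1 n)) ?_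
  simp only [mul_div_assoc]
  exact (Real.summable_pow_div_factorial _).mul_left _

/-- ENNReal-valued heat kernel. -/
noncomputable def pE (m : ℕ) (t : ℝ) (x y : Fin m → ℤ) : ENNReal := ENNReal.ofReal (heatKernel m t x y)

lemma pE_sum {m : ℕ} (hm : 1 ≤ m) {t : ℝ} (ht : 0 ≤ t) (x : Fin m → ℤ) :
    ∑' y, pE m t x y = 1 := by
  unfold pE heatKernel
  have e : ∀ y, ENNReal.ofReal (∑' n : ℕ, Real.exp (-(2 * m) * t) * ((2 * m) * t) ^ n / n.factorial
      * srwKernel m n x y) = ∑' n : ℕ, ENNReal.ofReal (Real.exp (-(2 * m) * t) * ((2 * m) * t) ^ n / n.factorial) * ENNReal.ofReal (srwKernel m n x y) := by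
    intro y
    rw [ENNReal.ofReal_tsum_of_nonneg (fun n => mul_nonneg (by positivity) (srw_nonneg m n x y))
      (heat_summable_series m hm t ht x y)]
    exact tsum_congr fun n => ENNReal.ofReal_mul (by positivity)
  simp only [e]
  rw [ENNReal.tsum_comm]
  simp only [ENNReal.tsum_mul_left]
  have e2 : ∀ n, ∑' y, ENNReal.ofReal (srwKernel m n x y) = 1 := by
    intro n
    rw [← ENNReal.ofReal_tsum_of_nonneg (fun y => srw_nonneg m n x y) (srw_hasSum hm n x).summable,
      (srw_hasSum hm n x).tsum_eq, ENNReal.ofReal_one]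
  simp only [e2, mul_one]
  have h := ((NormedSpace.expSeries_div_hasSum_exp (𝔸 := ℝ) (2 * m * t)).mul_left
    (Real.exp (-(2 * m) * t)))
  rw [← Real.exp_eq_exp_ℝ, ← Real.exp_add] at h
  simp only [← mul_div_assoc] at h
  rw [← ENNReal.ofReal_tsum_of_nonneg (fun n => by positivity) h.summable, h.tsum_eq]
  simp

open MeasureTheory ProbabilityTheory Filter Set

section chains
variable {X : Type*}

/-- Weight of a path `y` started at `x0` under time-dependent kernels `q`. -/
noncomputable def chn {n : ℕ} (q : Fin n → X → X → ENNReal) (x0 : X) (y : Fin n → X) : ENNReal :=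
  ∏ i : Fin n, q i ((Fin.cons x0 y : Fin (n + 1) → X) i.castSucc) (y i)

lemma chn_cons {n : ℕ} (q : Fin (n + 1) → X → X → ENNReal) (x0 a : X) (y : Fin n → X) :
    chn q x0 (Fin.cons a y : Fin (n + 1) → X) = q 0 x0 a * chn (fun i => q i.succ) a y := by
  unfold chn
  rw [Fin.prod_univ_succ]
  congr 1

lemma tsum_fin_succ {n : ℕ} (F : (Fin (n + 1) → X) → ENNReal) :
    ∑' y, F y = ∑' a : X, ∑' y : Fin n → X, F (Fin.cons a y) := by
  rw [← (Fin.consEquiv (fun _ : Fin (n + 1) => X)).tsum_eq F, ENNReal.tsum_prod']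
  rfl

lemma chn_sum_succ {n : ℕ} (q : Fin (n + 1) → X → X → ENNReal) (x0 : X) :
    ∑' y, chn q x0 y = ∑' a, q 0 x0 a * ∑' y, chn (fun i => q i.succ) a y := by
  rw [tsum_fin_succ]
  simp only [chn_cons, ENNReal.tsum_mul_left]

lemma chn_sum_one {n : ℕ} (q : Fin n → X → X → ENNReal) (hq : ∀ i x, ∑' y, q i x y = 1) (x0 : X) :
    ∑' y, chn q x0 y = 1 := by
  induction n generalizing x0 with
  | zero => 
    rw [tsum_eq_single (fun i => i.elim0) (by intro b hb; exact absurd (Subsingleton.elim _ _) hb)]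
    simp [chn]
  | succ n ih =>
    rw [chn_sum_succ]
    simp only [ih (fun i => q i.succ) (fun i x => hq _ x), mul_one, hq]
end chains

section countableLaw
variable {Ω X Z : Type*} [MeasurableSpace Ω] 

lemma meas_eq_tsum [Countable Z] [MeasurableSpace Z] [MeasurableSingletonClass Z]
    (P : Measure Ω) {B : Ω → Z} (hB : Measurable B) (E : Set Ω) :
    P E = ∑' b, P (E ∩ B ⁻¹' {b}) := by
  have h := MeasureTheory.lintegral_countable' (μ := (P.restrict E).map B) (fun _ => (1 : ENNReal))
  rw [lintegral_one, Measure.map_apply hB MeasurableSet.univ, preimage_univ,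
    Measure.restrict_apply_univ] at h
  rw [h]
  refine tsum_congr fun b => ?_
  rw [one_mul, Measure.map_apply hB (measurableSet_singleton b), 
    Measure.restrict_apply (hB (measurableSet_singleton b)), inter_comm]

lemma lintegral_comp_eq_tsum [Countable Z] [MeasurableSpace Z] [MeasurableSingletonClass Z]
    (P : Measure Ω) {B : Ω → Z} (hB : Measurable B) (h : Z → ENNReal) :
    ∫⁻ ω, h (B ω) ∂P = ∑' b, h b * P (B ⁻¹' {b}) := by
  rw [← lintegral_map (f := h) (measurable_of_countable h) hB, lintegral_countable']
  refine tsum_congr fun b => ?_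
  rw [Measure.map_apply hB (measurableSet_singleton b)]

lemma indep_of_product [Countable Z] [MeasurableSpace Z] [MeasurableSingletonClass Z]
    [Countable X] [MeasurableSpace X] [MeasurableSingletonClass X]
    (P : Measure Ω) [IsProbabilityMeasure P] {A : Ω → X} {B : Ω → Z} (hA : Measurable A)
    (hB : Measurable B) (f : X → ENNReal) (g : Z → ENNReal)
    (hf : ∑' a, f a = 1) (hg : ∑' b, g b = 1)
    (h : ∀ a b, P (A ⁻¹' {a} ∩ B ⁻¹' {b}) = f a * g b) :
    (∀ a, P (A ⁻¹' {a}) = f a) ∧ (∀ b, P (B ⁻¹' {b}) = g b) ∧ IndepFun A B P := by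
  have h1 : ∀ a, P (A ⁻¹' {a}) = f a := by
    intro a
    rw [meas_eq_tsum P hB]
    simp only [h, ENNReal.tsum_mul_left, hg, mul_one]
  have h2 : ∀ b, P (B ⁻¹' {b}) = g b := by
    intro b
    rw [meas_eq_tsum P hA]
    simp only [inter_comm (B ⁻¹' {b}), h, ENNReal.tsum_mul_right, hf, one_mul]
  refine ⟨h1, h2, ?_⟩
  rw [indepFun_iff_map_prod_eq_prod_map_map hA.aemeasurable hB.aemeasurable]
  refine Measure.ext_of_singleton fun p => ?_
  rw [Measure.map_apply (hA.prodMk hB) (measurableSet_singleton p)]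
  rw [show ({p} : Set (X × Z)) = {p.1} ×ˢ {p.2} by simp, Measure.prod_prod,
    Measure.map_apply hA (measurableSet_singleton _), Measure.map_apply hB (measurableSet_singleton _),
    h1, h2, ← h]
  rfl
end countableLaw

section heatE
variable {m : ℕ}

lemma pE_eq_prod (hm : 1 ≤ m) {t : ℝ} (ht : 0 ≤ t) (x y : Fin m → ℤ) :
    pE m t x y = ∏ i, ENNReal.ofReal (kk t (x i - y i)) := by
  rw [pE, heat_eq_prod hm, ENNReal.ofReal_prod_of_nonneg (fun i _ => kk_nonneg ht _)]

lemma pE_comm (hm : 1 ≤ m) {t : ℝ} (ht : 0 ≤ t) (x y : Fin m → ℤ) : pE m t x y = pE m t y x := by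
  rw [pE_eq_prod hm ht, pE_eq_prod hm ht]
  refine Finset.prod_congr rfl fun i _ => ?_
  rw [← kk_neg, neg_sub]

lemma pE_trans (hm : 1 ≤ m) {t : ℝ} (ht : 0 ≤ t) (x y c : Fin m → ℤ) :
    pE m t (x + c) (y + c) = pE m t x y := by
  rw [pE_eq_prod hm ht, pE_eq_prod hm ht]
  refine Finset.prod_congr rfl fun i _ => ?_
  simp

lemma pE_diag (hm : 1 ≤ m) {t : ℝ} (ht : 0 ≤ t) (x : Fin m → ℤ) :
    pE m t x x = ENNReal.ofReal (kk t 0 ^ m) := by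
  rw [pE_eq_prod hm ht]
  simp [ENNReal.ofReal_pow (kk_nonneg ht 0)]

lemma pE_le_diag (hm : 1 ≤ m) {t : ℝ} (ht : 0 ≤ t) (x y : Fin m → ℤ) :
    pE m t x y ≤ ENNReal.ofReal (kk t 0 ^ m) := by
  rw [← pE_diag hm ht x, pE_eq_prod hm ht, pE_eq_prod hm ht]
  refine Finset.prod_le_prod' fun i _ => ENNReal.ofReal_le_ofReal ?_
  simpa using kk_le_diag t _

lemma pE_succ (hm : 1 ≤ m) {t : ℝ} (ht : 0 ≤ t) (x y : Fin (m + 1) → ℤ) :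
    pE (m + 1) t x y = ENNReal.ofReal (kk t (x 0 - y 0)) *
      pE m t (fun i => x i.succ) (fun i => y i.succ) := by
  rw [pE_eq_prod (by omega) ht, pE_eq_prod hm ht, Fin.prod_univ_succ]

lemma kE_sum {t : ℝ} (ht : 0 ≤ t) (a : ℤ) : ∑' b : ℤ, ENNReal.ofReal (kk t (a - b)) = 1 := by
  rw [← pE_sum le_rfl ht (fun _ : Fin 1 => a),
    ← (Equiv.funUnique (Fin 1) ℤ).tsum_eq]
  refine tsum_congr fun y => ?_
  rw [pE_eq_prod le_rfl ht]
  simp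

end heatE

/-- The `ℤ^d`-component of the walk. -/
def Yp {d : ℕ} {Ωw : Type*} (S : ℝ → Ωw → (Fin (d + 1) → ℤ)) (u : ℝ) (ω : Ωw) : Fin d → ℤ :=
  fun i => S u ω i.succ

section walk
variable {d : ℕ} {Ωw : Type*} [MeasurableSpace Ωw]
  {P : (Fin (d + 1) → ℤ) → Measure Ωw} {S : ℝ → Ωw → (Fin (d + 1) → ℤ)}

/-- Gaps of an increasing time sequence, starting from time zero. -/
noncomputable def gap {n : ℕ} (t : Fin n → ℝ) (i : Fin n) : ℝ :=
  t i - (Fin.cons 0 t : Fin (n + 1) → ℝ) i.castSucc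

lemma gap_nonneg {n : ℕ} {t : Fin n → ℝ} (h0 : ∀ i, 0 ≤ t i) (hm : Monotone t) (i : Fin n) :
    0 ≤ gap t i := by
  unfold gap
  cases n with
  | zero => exact i.elim0
  | succ n =>
    refine Fin.cases ?_ (fun j => ?_) i
    · simpa using h0 0
    · rw [← Fin.succ_castSucc, Fin.cons_succ]
      simpa using hm (Fin.castSucc_lt_succ (i := j)).le

lemma S_meas (hS : IsCTSRW (d + 1) P S) (u : ℝ) : Measurable (S u) :=
  hS.meas.comp (measurable_const.prodMk measurable_id)

lemma Y_meas2 (hS : IsCTSRW (d + 1) P S) : Measurable (fun p : ℝ × Ωw => Yp S p.1 p.2) := by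
  refine measurable_pi_lambda _ fun i => ?_
  exact (measurable_pi_apply _).comp hS.meas

lemma Y_meas (hS : IsCTSRW (d + 1) P S) (u : ℝ) : Measurable (Yp S u) :=
  (Y_meas2 hS).comp (measurable_const.prodMk measurable_id)

lemma S_law (hS : IsCTSRW (d + 1) P S) {n : ℕ} (t : Fin (n + 1) → ℝ)
    (h0 : ∀ i, 0 ≤ t i) (hm : Monotone t) (y : Fin (n + 1) → (Fin (d + 1) → ℤ)) :
    P 0 {ω | ∀ i, S (t i) ω = y i} = chn (fun i => pE (d + 1) (gap t i)) 0 y := by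
  have := hS.prob 0
  have h := hS.fdd 0 n t (h0 0) (fun i => hm (Fin.castSucc_lt_succ (i := i)).le) y
  rw [← ENNReal.ofReal_toReal (measure_ne_top (P 0) {ω | ∀ i, S (t i) ω = y i}), h]
  have hg : ∀ i, 0 ≤ gap t i := gap_nonneg h0 hm
  rw [ENNReal.ofReal_mul (heat_nonneg _ (h0 0) _ _), ENNReal.ofReal_prod_of_nonneg (fun i _ => heat_nonneg _ (by
    simpa using hm (Fin.castSucc_lt_succ (i := i)).le) _ _)]
  unfold chn
  rw [Fin.prod_univ_succ]
  congr 1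
  simp [gap, pE]

lemma Y_law_aux (hd : 1 ≤ d) (hS : IsCTSRW (d + 1) P S) {n : ℕ} (t : Fin (n + 1) → ℝ)
    (h0 : ∀ i, 0 ≤ t i) (hm : Monotone t) :
    (∀ a : Fin (n + 1) → ℤ, P 0 ((fun ω i => S (t i) ω 0) ⁻¹' {a}) =
      chn (fun i (a b : ℤ) => ENNReal.ofReal (kk (gap t i) (a - b))) 0 a) ∧
    (∀ y : Fin (n + 1) → (Fin d → ℤ),
      P 0 ((fun ω i => Yp S (t i) ω) ⁻¹' {y}) = chn (fun i => pE d (gap t i)) 0 y) ∧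
    IndepFun (fun ω i => S (t i) ω 0) (fun ω i => Yp S (t i) ω) (P 0) := by
  have := hS.prob 0
  have hg : ∀ i, 0 ≤ gap t i := gap_nonneg h0 hm
  refine indep_of_product (P 0) (A := fun ω (i : Fin (n + 1)) => S (t i) ω 0) ?_ ?_
    (chn (fun i (a b : ℤ) => ENNReal.ofReal (kk (gap t i) (a - b))) 0) _ ?_ ?_ ?_
  · exact measurable_pi_lambda _ fun i => (measurable_pi_apply _).comp (S_meas hS _)
  · exact measurable_pi_lambda _ fun i => Y_meas hS _
  · exact chn_sum_one _ (fun i x => kE_sum (hg i) x) _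
  · exact chn_sum_one _ (fun i x => pE_sum hd (hg i) x) _
  · intro a b
    have h := S_law hS t h0 hm (fun i => Fin.cons (a i) (b i))
    have e : (fun ω (i : Fin (n + 1)) => S (t i) ω 0) ⁻¹' {a} ∩ (fun ω i => Yp S (t i) ω) ⁻¹' {b}
      = {ω | ∀ i, S (t i) ω = Fin.cons (a i) (b i)} := by
      ext ω
      simp only [mem_inter_iff, mem_preimage, mem_singleton_iff, funext_iff, mem_ofPred_eq, Yp]
      constructor
      · rintro ⟨h1, h2⟩ i j
        refine Fin.cases ?_ (fun j => ?_) j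
        · simpa using h1 i
        · simpa using h2 i j
      · intro h
        exact ⟨fun i => by simpa using h i 0, fun i j => by simpa using h i j.succ⟩
    rw [e, h]
    unfold chn
    rw [← Finset.prod_mul_distrib]
    refine Finset.prod_congr rfl fun i _ => ?_
    beta_reduce
    rw [pE_succ hd (hg i)]
    refine Fin.cases ?_ (fun j => ?_) i
    · simp; rfl
    · rw [← Fin.succ_castSucc]; simp

end walk

open MeasureTheory ProbabilityTheory Filter Set

section walk
variable {d : ℕ} {Ωw : Type*} [MeasurableSpace Ωw]
  {P : (Fin (d + 1) → ℤ) → Measure Ωw} {S : ℝ → Ωw → (Fin (d + 1) → ℤ)}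

lemma S0_law (hd : 1 ≤ d) (hS : IsCTSRW (d + 1) P S) {u : ℝ} (hu : 0 ≤ u) :
    P 0 {ω | S u ω 0 = 0} = ENNReal.ofReal (kk u 0) := by
  have h := (Y_law_aux hd hS (fun _ : Fin 1 => u) (fun _ => hu) (fun _ _ _ => le_rfl)).1 0
  have e : {ω | S u ω 0 = 0} = (fun ω (_ : Fin 1) => S u ω 0) ⁻¹' {0} := by
    ext ω
    simp [funext_iff]
  rw [e, h]
  simp [chn, gap]

lemma Y_law_one (hd : 1 ≤ d) (hS : IsCTSRW (d + 1) P S) {u : ℝ} (hu : 0 ≤ u) (y : Fin d → ℤ) :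
    P 0 {ω | Yp S u ω = y} = pE d u 0 y := by
  have h := (Y_law_aux hd hS (fun _ : Fin 1 => u) (fun _ => hu) (fun _ _ _ => le_rfl)).2.1
    (fun _ => y)
  have e : {ω | Yp S u ω = y} = (fun ω (_ : Fin 1) => Yp S u ω) ⁻¹' {fun _ => y} := by
    ext ω
    simp [funext_iff]
  rw [e, h]
  simp [chn, gap]

lemma S0_indep (hd : 1 ≤ d) (hS : IsCTSRW (d + 1) P S) (u : NNReal) :
    IndepFun (fun ω => S u ω 0) (fun ω (v : NNReal) => Yp S v ω) (P 0) := by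
  have := hS.prob 0
  refine IndepFun.indepFun_process ((measurable_pi_apply _).comp (S_meas hS _))
    (fun v => Y_meas hS _) fun I => ?_
  set J : Finset NNReal := insert u I with hJ
  obtain ⟨n, hn⟩ : ∃ n, J.card = n + 1 :=
    ⟨J.card - 1, by have : 0 < J.card := Finset.card_pos.mpr ⟨u, by simp [hJ]⟩
                    omega⟩
  set t : Fin (n + 1) → NNReal := fun i => J.orderEmbOfFin hn i with ht
  have hsurj : ∀ v ∈ J, ∃ i, t i = v := by
    intro v hv
    have := Finset.range_orderEmbOfFin J hn
    have h2 : v ∈ Set.range (J.orderEmbOfFin hn) := by rw [this]; exact hv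
    exact h2
  have h := (Y_law_aux hd hS (fun i => (t i : ℝ)) (fun i => (t i).2) (fun i j hij => by
    have := (J.orderEmbOfFin hn).monotone hij
    exact_mod_cast this)).2.2
  obtain ⟨i0, hi0⟩ := hsurj u (by simp [hJ])
  choose! φ hφ using hsurj
  have m1 : Measurable (fun a : Fin (n + 1) → ℤ => a i0) := measurable_pi_apply i0
  have m2 : Measurable (fun (y : Fin (n + 1) → (Fin d → ℤ)) (v : I) => y (φ v)) :=
    measurable_pi_lambda _ fun v => measurable_pi_apply _
  have h2 := h.comp (φ := fun a : Fin (n + 1) → ℤ => a i0)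
    (ψ := fun (y : Fin (n + 1) → (Fin d → ℤ)) (v : I) => y (φ v)) m1 m2
  have e1 : (fun ω => S u ω 0) = (fun a : Fin (n + 1) → ℤ => a i0) ∘ (fun ω i => S (t i) ω 0) := by
    ext ω; simp [hi0]
  have e2 : (fun ω (i : I) => Yp S (i : NNReal) ω) =
      (fun (y : Fin (n + 1) → (Fin d → ℤ)) (v : I) => y (φ v)) ∘ (fun ω i => Yp S (t i) ω) := by
    ext ω v
    simp [hφ v (by simp [hJ])]
  rw [e1, e2]
  exact h2

/-- right-approximating grid points -/
noncomputable def grd (n : ℕ) (j : ℕ) : NNReal := (j + 1) / (n + 1)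

noncomputable def fl (n : ℕ) (u : ℝ) : ℕ := ⌊((n : ℝ) + 1) * u⌋₊

lemma fl_meas (n : ℕ) : Measurable (fl n) := by
  unfold fl
  exact Nat.measurable_floor.comp (by fun_prop)

lemma grd_gt (n : ℕ) (u : ℝ) : u < grd n (fl n u) := by
  have h := Nat.lt_floor_add_one (((n : ℝ) + 1) * u)
  simp only [grd, fl]
  push_cast
  rw [lt_div_iff₀ (by positivity)]
  linarith

lemma grd_le (n : ℕ) {u : ℝ} (hu : 0 ≤ u) : (grd n (fl n u) : ℝ) ≤ u + 1 / (n + 1) := by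
  have h := Nat.floor_le (show 0 ≤ ((n : ℝ) + 1) * u by positivity)
  simp only [grd, fl]
  push_cast
  rw [div_le_iff₀ (by positivity)]
  have e : (u + 1 / ((n : ℝ) + 1)) * ((n : ℝ) + 1) = ((n : ℝ) + 1) * u + 1 := by
    field_simp
  linarith

lemma grd_tendsto {u : ℝ} (hu : 0 ≤ u) :
    Tendsto (fun n => (grd n (fl n u) : ℝ)) atTop (nhds u) := by
  refine tendsto_of_tendsto_of_tendsto_of_le_of_le tendsto_const_nhds
    (h := fun n : ℕ => u + 1 / ((n : ℝ) + 1)) ?_ (fun n => (grd_gt n u).le) (fun n => grd_le n hu)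
  simpa using tendsto_const_nhds (x := u) |>.add tendsto_one_div_add_atTop_nhds_zero_nat

lemma grd_eventually {X : Type*} {f : ℝ → X} {u : ℝ} (hu : 0 ≤ u)
    (h : ∃ ε > (0 : ℝ), ∀ v, u ≤ v → v < u + ε → f v = f u) :
    ∀ᶠ n in atTop, f (grd n (fl n u)) = f u := by
  obtain ⟨ε, hε, h⟩ := h
  have := (grd_tendsto hu).eventually (gt_mem_nhds (show u < u + ε by linarith))
  filter_upwards [this] with n hn
  exact h _ (grd_gt n u).le hn

/-- Additive functional of the `ℤ^d`-component. -/
noncomputable def AA (S : ℝ → Ωw → (Fin (d + 1) → ℤ)) (w : (Fin d → ℤ) → ℝ) (t : ℝ) (ω : Ωw) : ℝ :=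
  ∫ u in Set.Ioc (0 : ℝ) t, w (Yp S u ω)

lemma wY_meas (hS : IsCTSRW (d + 1) P S) {β : Type*} [MeasurableSpace β] (w : (Fin d → ℤ) → β) :
    Measurable (fun p : ℝ × Ωw => w (Yp S p.1 p.2)) :=
  (measurable_of_countable w).comp (Y_meas2 hS)

lemma AA_meas (hS : IsCTSRW (d + 1) P S) (w : (Fin d → ℤ) → ℝ) (t : ℝ) :
    Measurable (AA S w t) := by
  unfold AA
  exact (wY_meas hS w).stronglyMeasurable.integral_prod_left'.measurable

lemma AA_nonneg {w : (Fin d → ℤ) → ℝ} (hw : ∀ x, 0 ≤ w x) (t : ℝ) (ω : Ωw) : 0 ≤ AA S w t ω :=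
  integral_nonneg fun _ => hw _

noncomputable def HH (w : (Fin d → ℤ) → ℝ) (t : ℝ) (φ : NNReal → (Fin d → ℤ)) : ℝ :=
  (∫⁻ u in Set.Ioc (0 : ℝ) t,
    limsup (fun n : ℕ => ENNReal.ofReal (w (φ (grd n (fl n u))))) atTop).toReal

lemma HH_meas (w : (Fin d → ℤ) → ℝ) (t : ℝ) : Measurable (HH w t) := by
  unfold HH
  refine Measurable.ennreal_toReal ?_
  refine Measurable.lintegral_prod_right' (f := fun p : (NNReal → (Fin d → ℤ)) × ℝ =>
    limsup (fun n : ℕ => ENNReal.ofReal (w (p.1 (grd n (fl n p.2))))) atTop) ?_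
  refine Measurable.limsup fun n => ?_
  have h1 : Measurable (fun q : ℕ × (NNReal → (Fin d → ℤ)) => ENNReal.ofReal (w (q.2 (grd n q.1)))) := by
    refine measurable_from_prod_countable_right fun j => ?_
    show Measurable (fun y : NNReal → (Fin d → ℤ) => ENNReal.ofReal (w (y (grd n j))))
    exact ((measurable_of_countable w).comp (measurable_pi_apply _)).ennreal_ofReal
  exact h1.comp (((fl_meas n).comp measurable_snd).prodMk measurable_fst)

lemma AA_eq_HH (hS : IsCTSRW (d + 1) P S) {w : (Fin d → ℤ) → ℝ} (hw : ∀ x, 0 ≤ w x) (t : ℝ) :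
    ∀ᵐ ω ∂(P 0), AA S w t ω = HH w t (fun v => Yp S v ω) := by
  filter_upwards [hS.rightCont 0] with ω hω
  unfold AA HH
  rw [integral_eq_lintegral_of_nonneg_ae (Eventually.of_forall fun _ => hw _)
    ((wY_meas hS w).comp measurable_prodMk_right).aestronglyMeasurable]
  congr 1
  refine setLIntegral_congr_fun measurableSet_Ioc fun u hu => ?_
  have h := grd_eventually (f := fun v => S v ω) hu.1.le (hω u hu.1.le)
  symm
  refine Tendsto.limsup_eq ?_
  refine Tendsto.congr' ?_ tendsto_const_nhds
  filter_upwards [h] with n hn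
  have hn' : S (grd n (fl n u)) ω = S u ω := hn
  have hy : Yp S u ω = Yp S (grd n (fl n u)) ω := by
    unfold Yp
    rw [hn']
  show ENNReal.ofReal (w (Yp S u ω)) = ENNReal.ofReal (w (Yp S (grd n (fl n u)) ω))
  rw [hy]

lemma layered_formula (hd : 1 ≤ d) (hS : IsCTSRW (d + 1) P S) {w : (Fin d → ℤ) → ℝ}
    (hw : ∀ x, 0 ≤ w x) {t : ℝ} (ht : 0 ≤ t) :
    P 0 {ω | Yp S t ω = 0 ∧ S (AA S w t ω) ω 0 = 0} =
      ∫⁻ ω in {ω | Yp S t ω = 0}, ENNReal.ofReal (kk (AA S w t ω) 0) ∂(P 0) := by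
  have := hS.prob 0
  set D : Set Ωw := {ω | Yp S t ω = 0} with hD
  have hDm : MeasurableSet D := (Y_meas hS t) (measurableSet_singleton 0)
  have hA := AA_meas hS w t
  have hAn := AA_nonneg (S := S) hw t
  have hSA : ∀ g : Ωw → ℝ, Measurable g → MeasurableSet {ω | S (g ω) ω 0 = 0} := by
    intro g hg
    have : Measurable (fun ω => S (g ω) ω 0) :=
      (measurable_pi_apply _).comp (hS.meas.comp (hg.prodMk measurable_id))
    exact this (measurableSet_singleton 0)
  have hgm : ∀ n, Measurable (fun ω => (grd n (fl n (AA S w t ω)) : ℝ)) := by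
    intro n
    exact (measurable_of_countable (fun j : ℕ => (grd n j : ℝ))).comp ((fl_meas n).comp hA)
  -- equality on the grid
  have key : ∀ n : ℕ, P 0 (D ∩ {ω | S (grd n (fl n (AA S w t ω))) ω 0 = 0}) =
      ∫⁻ ω in D, ENNReal.ofReal (kk (grd n (fl n (AA S w t ω))) 0) ∂(P 0) := by
    intro n
    have hN : Measurable (fun ω => fl n (AA S w t ω)) := (fl_meas n).comp hA
    rw [meas_eq_tsum (P 0) hN, lintegral_comp_eq_tsum _ hN
      (fun j => ENNReal.ofReal (kk (grd n j) 0))]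
    refine tsum_congr fun j => ?_
    rw [Measure.restrict_apply (hN (measurableSet_singleton j))]
    set E : Set (NNReal → (Fin d → ℤ)) := {φ | φ ⟨t, ht⟩ = 0 ∧ fl n (HH w t φ) = j} with hE
    have hEm : MeasurableSet E := by
      refine MeasurableSet.inter ?_ ?_
      · exact (measurable_pi_apply _) (measurableSet_singleton 0)
      · exact ((fl_meas n).comp (HH_meas w t)) (measurableSet_singleton j)
    have hae : ∀ᵐ ω ∂(P 0), (ω ∈ D ∧ fl n (AA S w t ω) = j) ↔
        (fun (v : NNReal) => Yp S v ω) ∈ E := by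
      filter_upwards [AA_eq_HH hS hw t] with ω hω
      rw [hω]
      rfl
    have hind := (S0_indep hd hS (grd n j)).measure_inter_preimage_eq_mul _ _
      (measurableSet_singleton (0 : ℤ)) hEm
    have e1 : P 0 ((fun ω => fl n (AA S w t ω)) ⁻¹' {j} ∩ D) =
        P 0 ((fun ω (v : NNReal) => Yp S v ω) ⁻¹' E) := by
      refine measure_congr ?_
      filter_upwards [hae] with ω hω
      refine propext ?_
      exact (and_comm.trans hω)
    have e2 : P 0 (D ∩ {ω | S (grd n (fl n (AA S w t ω))) ω 0 = 0} ∩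
        (fun ω => fl n (AA S w t ω)) ⁻¹' {j}) =
        P 0 ((fun ω => S (grd n j) ω 0) ⁻¹' {0} ∩ (fun ω (v : NNReal) => Yp S v ω) ⁻¹' E) := by
      refine measure_congr ?_
      filter_upwards [hae] with ω hω
      refine propext ?_
      constructor
      · rintro ⟨⟨h1, h2⟩, h3⟩
        have h3' : fl n (AA S w t ω) = j := h3
        refine ⟨?_, hω.mp ⟨h1, h3'⟩⟩
        have h2' : S (grd n (fl n (AA S w t ω))) ω 0 = 0 := h2
        rw [h3'] at h2'
        exact h2'
      · rintro ⟨h1, h2⟩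
        obtain ⟨h3, h4⟩ := hω.mpr h2
        refine ⟨⟨h3, ?_⟩, h4⟩
        show S (grd n (fl n (AA S w t ω))) ω 0 = 0
        rw [h4]; exact h1
    rw [e1, e2, hind]
    congr 1
    exact S0_law hd hS (grd n j).2
  have lim1 : Tendsto (fun n => P 0 (D ∩ {ω | S (grd n (fl n (AA S w t ω))) ω 0 = 0})) atTop
      (nhds (P 0 (D ∩ {ω | S (AA S w t ω) ω 0 = 0}))) := by
    refine tendsto_measure_of_ae_tendsto_indicator_of_isFiniteMeasure atTop
      (hDm.inter (hSA _ hA)) (fun n => hDm.inter (hSA _ (hgm n))) ?_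
    filter_upwards [hS.rightCont 0] with ω hω
    have h := grd_eventually (f := fun v => S v ω) (hAn ω) (hω _ (hAn ω))
    filter_upwards [h] with n hn
    show ω ∈ D ∧ S (grd n (fl n (AA S w t ω))) ω 0 = 0 ↔ ω ∈ D ∧ S (AA S w t ω) ω 0 = 0
    have hn' : S (grd n (fl n (AA S w t ω))) ω = S (AA S w t ω) ω := hn
    rw [hn']
  have lim2 : Tendsto (fun n => ∫⁻ ω in D, ENNReal.ofReal (kk (grd n (fl n (AA S w t ω))) 0) ∂(P 0))
      atTop (nhds (∫⁻ ω in D, ENNReal.ofReal (kk (AA S w t ω) 0) ∂(P 0))) := by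
    refine tendsto_lintegral_of_dominated_convergence (fun _ => 1) ?_ ?_ ?_ ?_
    · intro n
      exact ((kk_measurable 0).comp (hgm n)).ennreal_ofReal
    · intro n
      refine Eventually.of_forall fun ω => ?_
      exact ENNReal.ofReal_le_one.mpr (kk_le_one (grd n _).2 0)
    · rw [lintegral_one]; exact measure_ne_top _ _
    · refine Eventually.of_forall fun ω => ?_
      refine (ENNReal.continuous_ofReal.tendsto _).comp ?_
      exact kk_tendsto (fun n => (grd n _).2) (grd_tendsto (hAn ω)) 0
  have h3 := tendsto_nhds_unique lim1 (lim2.congr fun n => (key n).symm)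
  exact h3

end walk

open MeasureTheory ProbabilityTheory Filter Set

section loc
variable {X : Type*} [DecidableEq X]

lemma tsum_split_single (x : X) (f : X → ENNReal) (β : ENNReal) :
    ∑' y, f y * (if y = x then 1 + β else 1) = ∑' y, f y + β * f x := by
  have : ∀ y, f y * (if y = x then 1 + β else 1) = f y + (if y = x then β * f x else 0) := by
    intro y
    split_ifs with h
    · subst h; ring
    · simp
  simp only [this]
  rw [ENNReal.tsum_add, tsum_ite_eq]

lemma loc_V (p : X → X → ENNReal) (pj : ℕ → X → X → ENNReal) (hp : ∀ x, ∑' y, p x y = 1)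
    (h0 : ∀ x y, pj 0 x y = p x y) (hj : ∀ j b x, ∑' y, p b y * pj j y x = pj (j + 1) b x)
    (β : ENNReal) (x : X) (n : ℕ) (hG : 2 * β * ∑ j ∈ Finset.range n, pj j x x ≤ 1) (b : X) :
    ∑' y : Fin n → X, chn (fun _ => p) b y * ∏ j, (if y j = x then 1 + β else 1) ≤
      1 + 2 * β * ∑ j ∈ Finset.range n, pj j b x := by
  induction n generalizing b with
  | zero =>
    rw [tsum_eq_single (fun i => i.elim0) (by intro b hb; exact absurd (Subsingleton.elim _ _) hb)]
    simp [chn]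
  | succ n ih =>
    have hG' : 2 * β * ∑ j ∈ Finset.range n, pj j x x ≤ 1 := by
      refine le_trans ?_ hG
      gcongr
      exact Nat.le_succ n
    have ih := ih hG'
    rw [tsum_fin_succ]
    simp only [chn_cons, Fin.prod_univ_succ, Fin.cons_zero, Fin.cons_succ]
    have e : ∀ a : X, ∑' y : Fin n → X, p b a * chn (fun _ => p) a y *
        ((if a = x then 1 + β else 1) * ∏ j, (if y j = x then 1 + β else 1)) =
        (p b a * ∑' y : Fin n → X, chn (fun _ => p) a y * ∏ j, (if y j = x then 1 + β else 1)) *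
        (if a = x then 1 + β else 1) := by
      intro a
      rw [← ENNReal.tsum_mul_left, ← ENNReal.tsum_mul_right]
      refine tsum_congr fun y => ?_
      ring
    rw [tsum_congr e, tsum_split_single]
    calc _ ≤ ∑' a, p b a * (1 + 2 * β * ∑ j ∈ Finset.range n, pj j a x) +
          β * (p b x * (1 + 1)) := by
          refine add_le_add (ENNReal.tsum_le_tsum fun a => ?_) ?_
          · gcongr
            exact ih a
          · gcongr
            exact (ih x).trans (by gcongr)
      _ = 1 + 2 * β * ∑ j ∈ Finset.range (n + 1), pj j b x := by
          rw [Finset.sum_range_succ', h0]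
          simp only [mul_add, mul_one, ENNReal.tsum_add, hp]
          have : ∑' a, p b a * (2 * β * ∑ j ∈ Finset.range n, pj j a x) =
              2 * β * ∑ j ∈ Finset.range n, pj (j + 1) b x := by
            simp only [← hj]
            rw [← Summable.tsum_finsetSum (fun _ _ => ENNReal.summable), ← ENNReal.tsum_mul_left]
            refine tsum_congr fun a => ?_
            rw [← Finset.mul_sum]
            ring
          rw [this]
          ring

lemma loc_exp (p : X → X → ENNReal) (pj : ℕ → X → X → ENNReal) (hp : ∀ x, ∑' y, p x y = 1)
    (h0 : ∀ x y, pj 0 x y = p x y) (hj : ∀ j b x, ∑' y, p b y * pj j y x = pj (j + 1) b x)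
    (β : ENNReal) {n : ℕ} (hG : ∀ x, 2 * β * ∑ j ∈ Finset.range n, pj j x x ≤ 1)
    (q : Fin n → X → X → ENNReal) (hq : ∀ i x, ∑' y, q i x y = 1)
    (hqp : ∀ i : Fin n, (i : ℕ) ≠ 0 → q i = p) (b : X) (i : Fin n) :
    ∑' y : Fin n → X, chn q b y * ∏ j, (if i < j ∧ y j = y i then 1 + β else 1) ≤ 2 := by
  induction n generalizing b with
  | zero => exact i.elim0
  | succ n ih =>
    have hG' : ∀ x, 2 * β * ∑ j ∈ Finset.range n, pj j x x ≤ 1 := by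
      intro x
      refine le_trans ?_ (hG x)
      gcongr
      exact Nat.le_succ n
    have hqs : (fun i : Fin n => q i.succ) = fun _ => p := by
      ext1 i
      exact hqp _ (by simp)
    rw [tsum_fin_succ]
    have e : ∀ a, ∑' y : Fin n → X, chn q b (Fin.cons a y : Fin (n + 1) → X) *
        ∏ j, (if i < j ∧ (Fin.cons a y : Fin (n + 1) → X) j = (Fin.cons a y : Fin (n + 1) → X) i
          then 1 + β else 1) ≤ q 0 b a * 2 := by
      intro a
      simp only [chn_cons, mul_assoc]
      rw [ENNReal.tsum_mul_left]
      gcongr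
      rw [hqs]
      refine Fin.cases ?_ (fun k => ?_) i
      · simp only [Fin.prod_univ_succ, Fin.cons_zero, Fin.cons_succ, lt_irrefl, false_and, if_false,
          one_mul, Fin.succ_pos, true_and]
        refine (loc_V p pj hp h0 hj β a n (hG' a) a).trans ?_
        calc _ ≤ (1 : ENNReal) + 1 := by gcongr; exact hG' a
          _ = 2 := by norm_num
      · simp only [Fin.prod_univ_succ, Fin.cons_zero, Fin.cons_succ, Fin.not_lt_zero, false_and,
          if_false, one_mul, Fin.succ_lt_succ_iff]
        exact ih hG' (fun _ => p) (fun _ => hp) (fun _ _ => rfl) a k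
    refine (ENNReal.tsum_le_tsum e).trans ?_
    rw [ENNReal.tsum_mul_right, hq, one_mul]

/-- later returns -/
def Nf {n : ℕ} (y : Fin n → X) (i : Fin n) : ℕ := ((Finset.univ : Finset (Fin n)).filter (fun j => i < j ∧ y j = y i)).card

lemma sum_coinc {n : ℕ} (y : Fin n → X) :
    ∑ i, ((Finset.univ : Finset (Fin n)).filter (fun j => y j = y i)).card = n + 2 * ∑ i, Nf y i := by
  simp only [Nf, Finset.card_filter]
  have e : ∀ i j : Fin n, (if y j = y i then 1 else 0) = (if i = j then 1 else 0) +
      (if i < j ∧ y j = y i then 1 else 0) + (if j < i ∧ y i = y j then 1 else 0) := by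
    intro i j
    rcases lt_trichotomy i j with h | h | h
    · simp [h, h.ne, h.le, not_lt.mpr h.le]
    · simp [h]
    · simp [h, h.ne', not_lt.mpr h.le, eq_comm]
  simp only [e, Finset.sum_add_distrib]
  rw [Finset.sum_comm (f := fun i j => if j < i ∧ y i = y j then 1 else 0)]
  simp
  ring

lemma exp_coinc {n : ℕ} (hn : 0 < n) (y : Fin n → X) {c : ℝ} :
    Real.exp (c * ∑ i, ((Finset.univ : Finset (Fin n)).filter (fun j => y j = y i)).card) ≤
      Real.exp (c * n) * ((n : ℝ)⁻¹ * ∑ i, Real.exp (2 * c * n) ^ Nf y i) := by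
  have hn' : (0 : ℝ) < n := by exact_mod_cast hn
  have h1 := sum_coinc y
  have h2 : (∑ i, (((Finset.univ : Finset (Fin n)).filter (fun j => y j = y i)).card : ℝ)) = n + 2 * ∑ i, (Nf y i : ℝ) := by
    exact_mod_cast h1
  push_cast
  rw [h2, mul_add, Real.exp_add]
  gcongr
  have h3 := convexOn_exp.map_sum_le (t := Finset.univ) (w := fun _ : Fin n => (n : ℝ)⁻¹)
    (p := fun i => 2 * c * n * Nf y i) (fun _ _ => by positivity) (by simp [hn'.ne'])
    (fun _ _ => Set.mem_univ _)
  simp only [smul_eq_mul] at h3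
  rw [← Finset.mul_sum, ← Finset.mul_sum, ← Finset.mul_sum] at h3
  have e : c * (2 * ∑ i, (Nf y i : ℝ)) = (n : ℝ)⁻¹ * (2 * c * n * ∑ i, (Nf y i : ℝ)) := by
    field_simp
  rw [e]
  refine h3.trans (le_of_eq ?_)
  congr 1
  refine Finset.sum_congr rfl fun i _ => ?_
  rw [← Real.exp_nat_mul]
  congr 1
  ring

lemma chn_coinc (p : X → X → ENNReal) (pj : ℕ → X → X → ENNReal) (hp : ∀ x, ∑' y, p x y = 1)
    (h0 : ∀ x y, pj 0 x y = p x y) (hj : ∀ j b x, ∑' y, p b y * pj j y x = pj (j + 1) b x)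
    {c : ℝ} (hc : 0 ≤ c) {n : ℕ} (hn : 0 < n)
    (hG : ∀ x, 2 * ENNReal.ofReal (Real.exp (2 * c * n) - 1) * ∑ j ∈ Finset.range n, pj j x x ≤ 1)
    (q : Fin n → X → X → ENNReal) (hq : ∀ i x, ∑' y, q i x y = 1)
    (hqp : ∀ i : Fin n, (i : ℕ) ≠ 0 → q i = p) (b : X) :
    ∑' y : Fin n → X, chn q b y * ENNReal.ofReal (Real.exp (c * ∑ i, ((Finset.univ : Finset (Fin n)).filter (fun j => y j = y i)).card))
      ≤ ENNReal.ofReal (Real.exp (c * n)) * 2 := by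
  set β := ENNReal.ofReal (Real.exp (2 * c * n) - 1) with hβ
  have hβ1 : 1 + β = ENNReal.ofReal (Real.exp (2 * c * n)) := by
    rw [hβ, ← ENNReal.ofReal_one, ← ENNReal.ofReal_add zero_le_one]
    · congr 1; ring
    · have := Real.add_one_le_exp (2 * c * n)
      have : 0 ≤ 2 * c * n := by positivity
      linarith
  have h1 := loc_exp p pj hp h0 hj β hG q hq hqp b
  have e1 : ∀ (y : Fin n → X) i, ∏ j, (if i < j ∧ y j = y i then 1 + β else 1) =
      ENNReal.ofReal (Real.exp (2 * c * n) ^ Nf y i) := by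
    intro y i
    rw [Finset.prod_ite, Finset.prod_const, Finset.prod_const_one, mul_one, hβ1,
      ENNReal.ofReal_pow (Real.exp_pos _).le]
    rfl
  have hn' : (0 : ℝ) < n := by exact_mod_cast hn
  calc _ ≤ ∑' y : Fin n → X, ENNReal.ofReal (Real.exp (c * n)) * (ENNReal.ofReal ((n : ℝ)⁻¹) *
        ∑ i, chn q b y * ∏ j, (if i < j ∧ y j = y i then 1 + β else 1)) := by
        refine ENNReal.tsum_le_tsum fun y => ?_
        refine (mul_le_mul_right (ENNReal.ofReal_le_ofReal (exp_coinc hn y)) _).trans (le_of_eq ?_)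
        rw [ENNReal.ofReal_mul (Real.exp_pos _).le, ENNReal.ofReal_mul (by positivity),
          ENNReal.ofReal_sum_of_nonneg (fun i _ => by positivity), ← Finset.mul_sum]
        simp only [e1]
        ring
    _ = ENNReal.ofReal (Real.exp (c * n)) * (ENNReal.ofReal ((n : ℝ)⁻¹) *
        ∑ i, ∑' y : Fin n → X, chn q b y * ∏ j, (if i < j ∧ y j = y i then 1 + β else 1)) := by
        rw [ENNReal.tsum_mul_left, ENNReal.tsum_mul_left,
          Summable.tsum_finsetSum (fun _ _ => ENNReal.summable)]
    _ ≤ ENNReal.ofReal (Real.exp (c * n)) * (ENNReal.ofReal ((n : ℝ)⁻¹) * ∑ i : Fin n, 2) := by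
        gcongr with i
        exact h1 i
    _ = ENNReal.ofReal (Real.exp (c * n)) * 2 := by
        congr 1
        rw [Finset.sum_const, Finset.card_univ, Fintype.card_fin, nsmul_eq_mul, ← mul_assoc,
          ENNReal.ofReal_inv_of_pos hn', ENNReal.ofReal_natCast,
          ENNReal.inv_mul_cancel (by simpa using hn.ne') (by simp), one_mul]

end loc

open MeasureTheory ProbabilityTheory Filter Set

section mgf
variable {X : Type*} [DecidableEq X] {Ωz : Type*} [MeasurableSpace Ωz] {μ : Measure Ωz}

lemma mgf_path [IsProbabilityMeasure μ] {w : X → Ωz → ℝ} (hw : ∀ x, Measurable (w x)) (hi : iIndepFun w μ)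
    {K m : ℝ} (hK : ∀ x ζ, w x ζ ∈ Set.Icc 0 K) (hm : ∀ x, ∫ ζ, w x ζ ∂μ = m) (l : ℝ)
    {n : ℕ} (y : Fin n → X) :
    ∫⁻ ζ, ENNReal.ofReal (Real.exp (l * ∑ j, (w (y j) ζ - m))) ∂μ ≤
      ENNReal.ofReal (Real.exp (l ^ 2 * K ^ 2 / 8 * ∑ i, ((Finset.univ : Finset (Fin n)).filter (fun j => y j = y i)).card)) := by
  set N : X → ℕ := fun x => ((Finset.univ : Finset (Fin n)).filter (fun j => y j = x)).card with hN
  set s := Finset.univ.image y with hs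
  set F : X → Ωz → ℝ := fun x ζ => N x * (w x ζ - m) with hF
  have hFm : ∀ x, Measurable (F x) := fun x => ((hw x).sub_const m).const_mul _
  have hFi : iIndepFun F μ := hi.comp (fun x r => N x * (r - m)) (fun x => by fun_prop)
  have h1 : ∀ ζ, ∑ j, (w (y j) ζ - m) = (∑ x ∈ s, F x) ζ := by
    intro ζ
    rw [Finset.sum_apply, Finset.sum_comp (fun x => w x ζ - m) y]
    refine Finset.sum_congr rfl fun x _ => ?_
    simp [hF, hN]
  have hsub : ∀ x, HasSubgaussianMGF (fun ζ => w x ζ - m) ((‖K - 0‖₊ / 2) ^ 2) μ := by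
    intro x
    have := hasSubgaussianMGF_of_mem_Icc (hw x).aemeasurable (Eventually.of_forall (hK x)) (μ := μ)
    rwa [hm x] at this
  have hmg : ∀ x, mgf (F x) μ l ≤ Real.exp (l ^ 2 * K ^ 2 / 8 * (N x * N x)) := by
    intro x
    have := (hsub x).mgf_le (l * N x)
    have e : mgf (F x) μ l = mgf (fun ζ => w x ζ - m) μ (l * N x) := by
      simp only [mgf, hF]
      congr 1; ext ζ; congr 1; ring
    rw [e]
    refine this.trans (le_of_eq ?_)
    congr 1
    push_cast
    rw [sub_zero, div_pow, Real.norm_eq_abs, sq_abs]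
    ring
  have hbd : ∀ ζ, (∑ x ∈ s, F x) ζ = ∑ j, (w (y j) ζ - m) := fun ζ => (h1 ζ).symm
  have hint : Integrable (fun ζ => Real.exp (l * (∑ x ∈ s, F x) ζ)) μ := by
    refine Integrable.of_bound (C := Real.exp (|l| * (n * (|K| + |m|)))) ?_ ?_
    · refine Measurable.aestronglyMeasurable ?_
      exact Real.measurable_exp.comp (Measurable.const_mul (by
        have h5 := Finset.measurable_sum s fun x _ => hFm x
        convert h5 using 1
        ext ζ
        rw [Finset.sum_apply]) l)
    · refine Eventually.of_forall fun ζ => ?_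
      rw [Real.norm_eq_abs, abs_of_pos (Real.exp_pos _)]
      refine Real.exp_le_exp.mpr ?_
      rw [hbd]
      refine (le_abs_self _).trans ?_
      rw [abs_mul]
      gcongr
      refine (Finset.abs_sum_le_sum_abs _ _).trans ?_
      have : ∀ j ∈ (Finset.univ : Finset (Fin n)), |w (y j) ζ - m| ≤ |K| + |m| := by
        intro j _
        refine (abs_sub _ _).trans ?_
        gcongr
        · exact (hK (y j) ζ).1
        · exact (hK (y j) ζ).2
      refine (Finset.sum_le_sum this).trans ?_
      simp [mul_add]
  simp only [h1]
  rw [← ofReal_integral_eq_lintegral_ofReal hint (Eventually.of_forall fun _ => (Real.exp_pos _).le)]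
  refine ENNReal.ofReal_le_ofReal ?_
  have h2 := hFi.mgf_sum hFm s (t := l)
  have h3 : ∫ ζ, Real.exp (l * (∑ x ∈ s, F x) ζ) ∂μ = ∏ x ∈ s, mgf (F x) μ l := h2
  rw [h3]
  refine (Finset.prod_le_prod (fun x _ => mgf_nonneg) (fun x _ => hmg x)).trans (le_of_eq ?_)
  rw [← Real.exp_sum, ← Finset.mul_sum]
  congr 2
  have := Finset.sum_comp (s := Finset.univ) (fun x => (N x : ℝ)) y
  push_cast
  rw [show (∑ i, ((Finset.univ.filter (fun j => y j = y i)).card : ℝ)) = ∑ i, (N (y i) : ℝ) from rfl, this]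
  refine Finset.sum_congr rfl fun x _ => ?_
  simp [hN]

end mgf

open MeasureTheory ProbabilityTheory Filter Set

section walk
variable {d : ℕ} {Ωw : Type*} [MeasurableSpace Ωw]
  {P : (Fin (d + 1) → ℤ) → Measure Ωw} {S : ℝ → Ωw → (Fin (d + 1) → ℤ)}

lemma Y_law_two (hd : 1 ≤ d) (hS : IsCTSRW (d + 1) P S) {s t : ℝ} (hs : 0 ≤ s) (ht : 0 ≤ t)
    (x y : Fin d → ℤ) :
    P 0 {ω | Yp S s ω = x ∧ Yp S (s + t) ω = y} = pE d s 0 x * pE d t x y := by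
  have h := (Y_law_aux hd hS (![s, s + t] : Fin 2 → ℝ) (by
    intro i; fin_cases i <;> simp <;> linarith) (by
    intro i j hij
    fin_cases i <;> fin_cases j <;> simp at hij ⊢ <;> linarith)).2.1 (![x, y])
  have e : {ω | Yp S s ω = x ∧ Yp S (s + t) ω = y} =
      (fun ω (i : Fin 2) => Yp S ((![s, s + t] : Fin 2 → ℝ) i) ω) ⁻¹' {![x, y]} := by
    ext ω
    simp only [mem_ofPred_eq, mem_preimage, mem_singleton_iff, funext_iff (f := fun (i : Fin 2) => Yp S ((![s, s + t] : Fin 2 → ℝ) i) ω), Fin.forall_fin_two]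
    rfl
  rw [e, h]
  simp [chn, gap, Fin.prod_univ_succ]

lemma pE_CK (hd : 1 ≤ d) (hS : IsCTSRW (d + 1) P S) {s t : ℝ} (hs : 0 ≤ s) (ht : 0 ≤ t)
    (x y : Fin d → ℤ) : ∑' a, pE d s x a * pE d t a y = pE d (s + t) x y := by
  have h0 : ∀ y, ∑' a, pE d s 0 a * pE d t a y = pE d (s + t) 0 y := by
    intro y
    rw [← Y_law_one hd hS (add_nonneg hs ht), meas_eq_tsum (P 0) (Y_meas hS s)]
    refine tsum_congr fun a => ?_
    rw [← Y_law_two hd hS hs ht]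
    congr 1
    ext ω
    exact and_comm
  have h1 := h0 (y - x)
  rw [← pE_trans hd (add_nonneg hs ht) _ _ x] at h1
  rw [zero_add, sub_add_cancel] at h1
  rw [← h1, ← (Equiv.addRight x).tsum_eq]
  refine tsum_congr fun a => ?_
  simp only [Equiv.coe_addRight]
  rw [← pE_trans hd hs 0 a x, ← pE_trans hd ht a (y - x) x]
  simp

lemma path_coinc (hd : 1 ≤ d) (hS : IsCTSRW (d + 1) P S) {v : ℝ} (hv : 0 ≤ v) {c : ℝ} (hc : 0 ≤ c)
    {n : ℕ} (hG : 2 * ENNReal.ofReal (Real.exp (2 * c * (n + 1 : ℕ)) - 1) *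
      ∑ j ∈ Finset.range (n + 1), pE d ((j : ℝ) + 1) 0 0 ≤ 1) :
    ∫⁻ ω, ENNReal.ofReal (Real.exp (c * ∑ i : Fin (n + 1), ((Finset.univ : Finset (Fin (n + 1))).filter
      (fun j : Fin (n + 1) => Yp S (v + (j : ℕ)) ω = Yp S (v + (i : ℕ)) ω)).card)) ∂(P 0) ≤
      ENNReal.ofReal (Real.exp (c * (n + 1 : ℕ))) * 2 := by
  set t : Fin (n + 1) → ℝ := fun i => v + (i : ℕ) with ht
  have h0 : ∀ i, 0 ≤ t i := fun i => by simp only [ht]; positivity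
  have hmono : Monotone t := by
    intro i j hij
    simp only [ht]
    have : (i : ℕ) ≤ j := hij
    have : ((i : ℕ) : ℝ) ≤ (j : ℕ) := by exact_mod_cast this
    linarith
  have h := (Y_law_aux hd hS t h0 hmono).2.1
  have hmeas : Measurable (fun ω (i : Fin (n + 1)) => Yp S (t i) ω) :=
    measurable_pi_lambda _ fun i => Y_meas hS _
  have := lintegral_comp_eq_tsum (P 0) hmeas (fun y : Fin (n + 1) → (Fin d → ℤ) =>
    ENNReal.ofReal (Real.exp (c * ∑ i, ((Finset.univ : Finset (Fin (n + 1))).filter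
      (fun j => y j = y i)).card)))
  rw [this]
  simp only [h]
  simp only [mul_comm _ (chn _ _ _)]
  have hg : ∀ i : Fin (n + 1), (i : ℕ) ≠ 0 → gap t i = 1 := by
    intro i
    refine Fin.cases (by simp) (fun k _ => ?_) i
    unfold gap
    rw [← Fin.succ_castSucc, Fin.cons_succ]
    simp [ht]
  refine chn_coinc (pE d 1) (fun j => pE d ((j : ℝ) + 1)) (fun x => pE_sum hd zero_le_one x)
    (fun x y => by simp) (fun j b x => ?_) hc (Nat.succ_pos n) (fun x => ?_) _
    (fun i x => pE_sum hd (gap_nonneg h0 hmono i) x) (fun i hi => by rw [hg i hi]) 0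
  · rw [pE_CK hd hS zero_le_one (by positivity)]
    push_cast
    rw [add_comm]
  · refine le_trans (le_of_eq ?_) hG
    congr 1
    refine Finset.sum_congr rfl fun j _ => ?_
    rw [pE_diag hd (by positivity), pE_diag hd (by positivity)]

variable {Ωz : Type*} [MeasurableSpace Ωz] {μ : Measure Ωz}

lemma joint_meas (hS : IsCTSRW (d + 1) P S) {β : Type*} [MeasurableSpace β] {w : (Fin d → ℤ) → Ωz → β} (hw : ∀ x, Measurable (w x)) :
    Measurable (fun p : Ωz × (ℝ × Ωw) => w (Yp S p.2.1 p.2.2) p.1) := by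
  have h1 : Measurable (fun q : Ωz × (Fin d → ℤ) => w q.2 q.1) :=
    measurable_from_prod_countable_left fun x => hw x
  exact h1.comp (measurable_fst.prodMk ((Y_meas2 hS).comp measurable_snd))

lemma annealed_v (hd : 1 ≤ d) (hS : IsCTSRW (d + 1) P S) [IsProbabilityMeasure μ]
    {w : (Fin d → ℤ) → Ωz → ℝ} (hw : ∀ x, Measurable (w x)) (hi : iIndepFun w μ)
    {K m : ℝ} (hK : ∀ x ζ, w x ζ ∈ Set.Icc 0 K) (hm : ∀ x, ∫ ζ, w x ζ ∂μ = m) (l : ℝ)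
    {n : ℕ} {v : ℝ} (hv : 0 ≤ v)
    (hG : 2 * ENNReal.ofReal (Real.exp (2 * (l ^ 2 * K ^ 2 / 8) * (n + 1 : ℕ)) - 1) *
      ∑ j ∈ Finset.range (n + 1), pE d ((j : ℝ) + 1) 0 0 ≤ 1) :
    ∫⁻ ω, ∫⁻ ζ, ENNReal.ofReal (Real.exp (l * ∑ j : Fin (n + 1), (w (Yp S (v + (j : ℕ)) ω) ζ - m))) ∂μ ∂(P 0)
      ≤ ENNReal.ofReal (Real.exp (l ^ 2 * K ^ 2 / 8 * (n + 1 : ℕ))) * 2 := by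
  refine le_trans (lintegral_mono fun ω => ?_) (path_coinc hd hS hv (by positivity) hG)
  exact mgf_path hw hi hK hm l (fun j : Fin (n + 1) => Yp S (v + (j : ℕ)) ω)

lemma AA_split (hS : IsCTSRW (d + 1) P S) {w : (Fin d → ℤ) → ℝ} {K : ℝ}
    (hK : ∀ x, w x ∈ Set.Icc 0 K) (ω : Ωw) (n : ℕ) :
    AA S w n ω = ∫ v in Set.Ioc (0 : ℝ) 1, ∑ j : Fin n, w (Yp S (v + (j : ℕ)) ω) := by
  have hint : ∀ a b : ℝ, IntervalIntegrable (fun u => w (Yp S u ω)) volume a b := by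
    intro a b
    rw [intervalIntegrable_iff]
    refine Measure.integrableOn_of_bounded (M := K) (by simp) ?_ ?_
    · exact ((wY_meas hS w).comp measurable_prodMk_right).aestronglyMeasurable
    · refine Eventually.of_forall fun u => ?_
      rw [Real.norm_eq_abs, abs_of_nonneg (hK _).1]
      exact (hK _).2
  unfold AA
  rw [← intervalIntegral.integral_of_le (by positivity), ← intervalIntegral.integral_of_le zero_le_one,
    intervalIntegral.integral_finsetSum]
  · have := intervalIntegral.sum_integral_adjacent_intervals (f := fun u => w (Yp S u ω))
      (μ := volume) (a := fun k : ℕ => (k : ℝ)) (n := n) (fun k _ => hint _ _)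
    rw [Nat.cast_zero] at this
    rw [← this, Finset.sum_range]
    refine Finset.sum_congr rfl fun j _ => ?_
    rw [intervalIntegral.integral_comp_add_right (fun u => w (Yp S u ω))]
    congr 1 <;> push_cast <;> ring
  · intro j _
    have := (hint (0 + (j : ℕ)) (1 + (j : ℕ))).comp_add_right ((j : ℕ) : ℝ)
    simpa using this

end walk

open MeasureTheory ProbabilityTheory Filter Set

section walk
variable {d : ℕ} {Ωw : Type*} [MeasurableSpace Ωw]
  {P : (Fin (d + 1) → ℤ) → Measure Ωw} {S : ℝ → Ωw → (Fin (d + 1) → ℤ)}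
variable {Ωz : Type*} [MeasurableSpace Ωz] {μ : Measure Ωz}

lemma unit_prob : IsProbabilityMeasure (volume.restrict (Set.Ioc (0 : ℝ) 1)) :=
  ⟨by simp⟩

lemma jensen_A (hS : IsCTSRW (d + 1) P S) {w : (Fin d → ℤ) → ℝ} {K : ℝ}
    (hK : ∀ x, w x ∈ Set.Icc 0 K) (ω : Ωw) (n : ℕ) (m l : ℝ) :
    ENNReal.ofReal (Real.exp (l * (AA S w n ω - m * n))) ≤
      ∫⁻ v in Set.Ioc (0 : ℝ) 1, ENNReal.ofReal (Real.exp (l * ∑ j : Fin n, (w (Yp S (v + (j : ℕ)) ω) - m))) := by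
  have := unit_prob
  set f : ℝ → ℝ := fun v => l * ∑ j : Fin n, (w (Yp S (v + (j : ℕ)) ω) - m) with hf
  have hmm : ∀ j : ℕ, Measurable (fun v => w (Yp S (v + j) ω)) := fun j =>
    (wY_meas hS w).comp (by fun_prop : Measurable (fun v : ℝ => (v + (j : ℝ), ω)))
  have hfm : Measurable f := by
    refine Measurable.const_mul ?_ l
    exact Finset.measurable_sum _ fun j _ => (hmm _).sub_const m
  have hfb : ∀ v, |f v| ≤ |l| * (n * (K + |m|)) := by
    intro v
    rw [hf]
    simp only [abs_mul]
    gcongr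
    refine (Finset.abs_sum_le_sum_abs _ _).trans ?_
    have : ∀ j ∈ (Finset.univ : Finset (Fin n)), |w (Yp S (v + (j : ℕ)) ω) - m| ≤ K + |m| := by
      intro j _
      refine (abs_sub _ _).trans ?_
      rw [abs_of_nonneg (hK _).1]
      gcongr
      exact (hK _).2
    refine (Finset.sum_le_sum this).trans ?_
    simp [mul_add]
  have hfi : Integrable f (volume.restrict (Set.Ioc (0 : ℝ) 1)) :=
    Integrable.of_bound hfm.aestronglyMeasurable _ (Eventually.of_forall hfb)
  have hei : Integrable (fun v => Real.exp (f v)) (volume.restrict (Set.Ioc (0 : ℝ) 1)) := by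
    refine Integrable.of_bound (C := Real.exp (|l| * (n * (K + |m|))))
      (Real.measurable_exp.comp hfm).aestronglyMeasurable (Eventually.of_forall fun v => ?_)
    rw [Real.norm_eq_abs, abs_of_pos (Real.exp_pos _)]
    exact Real.exp_le_exp.mpr ((le_abs_self _).trans (hfb v))
  have hJ := convexOn_exp.map_integral_le (μ := volume.restrict (Set.Ioc (0 : ℝ) 1)) (f := f)
    Real.continuous_exp.continuousOn isClosed_univ (Eventually.of_forall fun _ => mem_univ _) hfi hei
  have e : l * (AA S w n ω - m * n) = ∫ v in Set.Ioc (0 : ℝ) 1, f v := by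
    rw [AA_split hS hK, hf, integral_const_mul]
    congr 1
    have : ∀ v : ℝ, ∑ j : Fin n, (w (Yp S (v + (j : ℕ)) ω) - m) =
        (∑ j : Fin n, w (Yp S (v + (j : ℕ)) ω)) - m * n := by
      intro v
      rw [Finset.sum_sub_distrib]
      simp [mul_comm]
    simp only [this]
    rw [integral_sub]
    · simp
    · refine integrable_finsetSum _ fun j _ => ?_
      refine Integrable.of_bound (C := K) (hmm _).aestronglyMeasurable (Eventually.of_forall fun v => ?_)
      rw [Real.norm_eq_abs, abs_of_nonneg (hK _).1]
      exact (hK _).2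
    · exact integrable_const _
  rw [e, ← ofReal_integral_eq_lintegral_ofReal hei (Eventually.of_forall fun _ => (Real.exp_pos _).le)]
  exact ENNReal.ofReal_le_ofReal hJ

lemma annealed_A (hd : 1 ≤ d) (hS : IsCTSRW (d + 1) P S) [IsProbabilityMeasure μ]
    {w : (Fin d → ℤ) → Ωz → ℝ} (hw : ∀ x, Measurable (w x)) (hi : iIndepFun w μ)
    {K m : ℝ} (hK : ∀ x ζ, w x ζ ∈ Set.Icc 0 K) (hm : ∀ x, ∫ ζ, w x ζ ∂μ = m) (l : ℝ)
    {n : ℕ}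
    (hG : 2 * ENNReal.ofReal (Real.exp (2 * (l ^ 2 * K ^ 2 / 8) * (n + 1 : ℕ)) - 1) *
      ∑ j ∈ Finset.range (n + 1), pE d ((j : ℝ) + 1) 0 0 ≤ 1) :
    ∫⁻ ζ, ∫⁻ ω, ENNReal.ofReal (Real.exp (l * (AA S (fun x => w x ζ) (n + 1 : ℕ) ω - m * (n + 1 : ℕ)))) ∂(P 0) ∂μ
      ≤ ENNReal.ofReal (Real.exp (l ^ 2 * K ^ 2 / 8 * (n + 1 : ℕ))) * 2 := by
  have := hS.prob 0
  have := unit_prob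
  set f : Ωz × (ℝ × Ωw) → ENNReal := fun p => ENNReal.ofReal (Real.exp (l * ∑ j : Fin (n + 1),
    (w (Yp S (p.2.1 + (j : ℕ)) p.2.2) p.1 - m))) with hf
  have hfm : Measurable f := by
    refine ENNReal.measurable_ofReal.comp (Real.measurable_exp.comp (Measurable.const_mul ?_ l))
    refine Finset.measurable_sum _ fun j _ => Measurable.sub_const ?_ m
    exact (joint_meas hS hw).comp (by fun_prop : Measurable (fun p : Ωz × (ℝ × Ωw) => (p.1, (p.2.1 + ((j : ℕ) : ℝ), p.2.2))))
  set ν := volume.restrict (Set.Ioc (0 : ℝ) 1) with hν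
  calc _ ≤ ∫⁻ ζ, ∫⁻ ω, ∫⁻ v, f (ζ, (v, ω)) ∂ν ∂(P 0) ∂μ :=
        lintegral_mono fun ζ => lintegral_mono fun ω => jensen_A hS (fun x => hK x ζ) ω _ m l
    _ = ∫⁻ ζ, ∫⁻ q, f (ζ, q) ∂(ν.prod (P 0)) ∂μ := by
        refine lintegral_congr fun ζ => ?_
        exact (lintegral_prod_symm' (fun q => f (ζ, q)) (hfm.comp measurable_prodMk_left)).symm
    _ = ∫⁻ q, ∫⁻ ζ, f (ζ, q) ∂μ ∂(ν.prod (P 0)) := lintegral_lintegral_swap hfm.aemeasurable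
    _ = ∫⁻ v, ∫⁻ ω, ∫⁻ ζ, f (ζ, (v, ω)) ∂μ ∂(P 0) ∂ν := by
        exact lintegral_prod _ (hfm.lintegral_prod_left').aemeasurable
    _ ≤ ∫⁻ v, ENNReal.ofReal (Real.exp (l ^ 2 * K ^ 2 / 8 * (n + 1 : ℕ))) * 2 ∂ν := by
        refine setLIntegral_mono measurable_const fun v hv => ?_
        exact annealed_v hd hS hw hi hK hm l hv.1.le hG
    _ = _ := by simp

lemma sum_inv_sqrt (n : ℕ) : ∑ j ∈ Finset.range n, 1 / Real.sqrt (j + 1) ≤ 2 * Real.sqrt n := by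
  induction n with
  | zero => simp
  | succ n ih =>
    rw [Finset.sum_range_succ]
    have h1 : 0 < Real.sqrt ((n : ℝ) + 1) := Real.sqrt_pos.mpr (by positivity)
    have h2 := Real.sq_sqrt (show (0 : ℝ) ≤ (n : ℝ) + 1 by positivity)
    have h3 := Real.sq_sqrt (show (0 : ℝ) ≤ (n : ℝ) by positivity)
    have h4 := Real.sqrt_nonneg (n : ℝ)
    push_cast
    have : 1 / Real.sqrt ((n : ℝ) + 1) ≤ 2 * Real.sqrt ((n : ℝ) + 1) - 2 * Real.sqrt n := by
      rw [div_le_iff₀ h1]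
      nlinarith [sq_nonneg (Real.sqrt ((n : ℝ) + 1) - Real.sqrt n)]
    linarith

lemma green_bound (hd : 1 ≤ d) : ∃ C > (0 : ℝ), ∀ n : ℕ,
    ∑ j ∈ Finset.range n, pE d ((j : ℝ) + 1) 0 0 ≤ ENNReal.ofReal (C * Real.sqrt n) := by
  obtain ⟨C, hC, h⟩ := kk_bound
  refine ⟨C * 2, by positivity, fun n => ?_⟩
  have h1 : ∀ j : ℕ, pE d ((j : ℝ) + 1) 0 0 ≤ ENNReal.ofReal (C * (1 / Real.sqrt (j + 1))) := by
    intro j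
    rw [pE_diag hd (by positivity)]
    refine ENNReal.ofReal_le_ofReal ?_
    have h2 := kk_nonneg (show (0 : ℝ) ≤ (j : ℝ) + 1 by positivity) 0
    have h3 := kk_le_one (show (0 : ℝ) ≤ (j : ℝ) + 1 by positivity) 0
    refine (pow_le_of_le_one h2 h3 (by omega)).trans ((h j).trans (le_of_eq ?_))
    ring
  refine (Finset.sum_le_sum fun j _ => h1 j).trans ?_
  rw [← ENNReal.ofReal_sum_of_nonneg (fun j _ => by positivity), ← Finset.mul_sum]
  refine ENNReal.ofReal_le_ofReal ?_
  have := sum_inv_sqrt n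
  nlinarith

end walk

open MeasureTheory ProbabilityTheory Filter Set

section walk
variable {d : ℕ} {Ωw : Type*} [MeasurableSpace Ωw]
  {P : (Fin (d + 1) → ℤ) → Measure Ωw} {S : ℝ → Ωw → (Fin (d + 1) → ℤ)}
variable {Ωz : Type*} [MeasurableSpace Ωz] {μ : Measure Ωz}

lemma AA_joint_meas (hS : IsCTSRW (d + 1) P S) {w : (Fin d → ℤ) → Ωz → ℝ} (hw : ∀ x, Measurable (w x))
    (t : ℝ) : Measurable (fun p : Ωz × Ωw => AA S (fun x => w x p.1) t p.2) := by
  unfold AA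
  have h := (joint_meas hS hw).comp (by fun_prop : Measurable (fun q : (Ωz × Ωw) × ℝ => (q.1.1, (q.2, q.1.2))))
  have h2 : StronglyMeasurable (fun q : (Ωz × Ωw) × ℝ => w (Yp S q.2 q.1.2) q.1.1) := h.stronglyMeasurable
  exact (h2.integral_prod_right' (ν := volume.restrict (Set.Ioc 0 t))).measurable

lemma conc_bound (hd : 1 ≤ d) (hS : IsCTSRW (d + 1) P S) [IsProbabilityMeasure μ]
    {w : (Fin d → ℤ) → Ωz → ℝ} (hw : ∀ x, Measurable (w x)) (hi : iIndepFun w μ)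
    {K m : ℝ} (hK : ∀ x ζ, w x ζ ∈ Set.Icc 0 K) (hm : ∀ x, ∫ ζ, w x ζ ∂μ = m) :
    ∃ κ > (0 : ℝ), ∀ ε > (0 : ℝ), ∀ n : ℕ,
      ∫⁻ ζ, P 0 {ω | ε * (n + 1 : ℕ) ≤ |AA S (fun x => w x ζ) (n + 1 : ℕ) ω - m * (n + 1 : ℕ)|} ∂μ ≤
        ENNReal.ofReal (4 * Real.exp 1 * Real.exp (-(κ * ε * Real.sqrt (Real.sqrt (n + 1 : ℕ))))) := by
  obtain ⟨C, hC, hCb⟩ := green_bound (d := d) hd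
  have := hS.prob 0
  set κ : ℝ := 1 / ((1 + |K|) * (1 + C)) with hκ
  have hκ0 : 0 < κ := by positivity
  refine ⟨κ, hκ0, fun ε hε n => ?_⟩
  set N : ℕ := n + 1 with hN
  have hN1 : (1 : ℝ) ≤ N := by rw [hN]; push_cast; linarith [n.cast_nonneg (α := ℝ)]
  set s : ℝ := Real.sqrt (Real.sqrt N) with hs
  have hs2 : s ^ 2 = Real.sqrt N := Real.sq_sqrt (Real.sqrt_nonneg _)
  have hs4 : s ^ 4 = N := by
    rw [show s ^ 4 = (s ^ 2) ^ 2 by ring, hs2, Real.sq_sqrt (by positivity)]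
  have hs1 : 1 ≤ s := by
    rw [hs, Real.one_le_sqrt, Real.one_le_sqrt]; exact hN1
  have hs0 : 0 < s := by linarith
  have hκK : κ ^ 2 * K ^ 2 * (1 + C) ^ 2 ≤ 1 := by
    have : κ ^ 2 * K ^ 2 * (1 + C) ^ 2 = (|K| / (1 + |K|)) ^ 2 := by
      rw [hκ, div_pow |K|, sq_abs]
      field_simp
    rw [this]
    refine pow_le_one₀ (by positivity) ?_
    rw [div_le_one (by positivity)]; linarith
  have hκC : κ ^ 2 * K ^ 2 * C ≤ 1 := by
    refine le_trans ?_ hκK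
    have : 0 ≤ κ ^ 2 * K ^ 2 := by positivity
    refine mul_le_mul_of_nonneg_left ?_ this
    nlinarith
  have hκ1 : κ ^ 2 * K ^ 2 ≤ 1 := by
    refine le_trans ?_ hκK
    have : 0 ≤ κ ^ 2 * K ^ 2 := by positivity
    nlinarith [mul_nonneg this hC.le]
  have hcn : ∀ l : ℝ, l ^ 2 = (κ / s ^ 3) ^ 2 → l ^ 2 * K ^ 2 / 8 * N = κ ^ 2 * K ^ 2 / (8 * s ^ 2) := by
    intro l hl
    rw [hl, ← hs4]
    field_simp
  have hann : ∀ l : ℝ, l ^ 2 = (κ / s ^ 3) ^ 2 →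
      ∫⁻ ζ, ∫⁻ ω, ENNReal.ofReal (Real.exp (l * (AA S (fun x => w x ζ) N ω - m * N))) ∂(P 0) ∂μ ≤
        ENNReal.ofReal (2 * Real.exp 1) := by
    intro l hl
    have h1 := hcn l hl
    have hsq : 1 ≤ s ^ 2 := one_le_pow₀ hs1
    have ha : κ ^ 2 * K ^ 2 / (8 * s ^ 2) ≤ 1 / 8 := by
      rw [div_le_div_iff₀ (by positivity) (by norm_num)]
      nlinarith
    have ha0 : 0 ≤ κ ^ 2 * K ^ 2 / (8 * s ^ 2) := by positivity
    refine (annealed_A hd hS hw hi hK hm l (n := n) ?_).trans ?_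
    · rw [← hN]
      have e : 2 * (l ^ 2 * K ^ 2 / 8) * (N : ℝ) = 2 * (κ ^ 2 * K ^ 2 / (8 * s ^ 2)) := by
        rw [← h1]; ring
      rw [e]
      have h2 := Real.abs_exp_sub_one_le (x := 2 * (κ ^ 2 * K ^ 2 / (8 * s ^ 2))) (by
        rw [abs_of_nonneg (by positivity)]; linarith)
      have h3 : Real.exp (2 * (κ ^ 2 * K ^ 2 / (8 * s ^ 2))) - 1 ≤ κ ^ 2 * K ^ 2 / (2 * s ^ 2) := by
        refine (le_abs_self _).trans (h2.trans (le_of_eq ?_))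
        rw [abs_of_nonneg (by positivity)]
        field_simp
        ring
      calc _ ≤ ENNReal.ofReal 2 * ENNReal.ofReal (κ ^ 2 * K ^ 2 / (2 * s ^ 2)) * ENNReal.ofReal (C * Real.sqrt N) := by
            gcongr
            · simp
            · exact hCb N
        _ = ENNReal.ofReal (κ ^ 2 * K ^ 2 * C) := by
            rw [← ENNReal.ofReal_mul (by positivity), ← ENNReal.ofReal_mul (by positivity), ← hs2]
            congr 1
            field_simp
        _ ≤ 1 := ENNReal.ofReal_le_one.mpr hκC
    · rw [← hN, h1, mul_comm, show (2 : ENNReal) = ENNReal.ofReal 2 by simp, ← ENNReal.ofReal_mul (by norm_num)]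
      refine ENNReal.ofReal_le_ofReal ?_
      have : Real.exp (κ ^ 2 * K ^ 2 / (8 * s ^ 2)) ≤ Real.exp 1 := Real.exp_le_exp.mpr (by linarith)
      linarith
  have hp := hann (κ / s ^ 3) rfl
  have hq := hann (-(κ / s ^ 3)) (by ring)
  set B : Ωz × Ωw → ℝ := fun p => AA S (fun x => w x p.1) N p.2 - m * N with hB
  have hBm : Measurable B := (AA_joint_meas hS hw N).sub_const _
  set F : ℝ → Ωz × Ωw → ENNReal := fun l p => ENNReal.ofReal (Real.exp (l * B p)) with hF
  have hFm : ∀ l, Measurable (F l) := fun l =>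
    ENNReal.measurable_ofReal.comp (Real.measurable_exp.comp (hBm.const_mul l))
  have hkN : κ / s ^ 3 * (ε * N) = κ * ε * s := by
    rw [← hs4]; field_simp
  have hpt : ∀ ζ ω, Set.indicator {ω | ε * N ≤ |AA S (fun x => w x ζ) N ω - m * N|} 1 ω ≤
      ENNReal.ofReal (Real.exp (-(κ * ε * s))) * (F (κ / s ^ 3) (ζ, ω) + F (-(κ / s ^ 3)) (ζ, ω)) := by
    intro ζ ω
    by_cases h : ω ∈ {ω | ε * N ≤ |AA S (fun x => w x ζ) N ω - m * N|}
    · rw [Set.indicator_of_mem h]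
      have h' : ε * N ≤ |B (ζ, ω)| := h
      simp only [hF]
      rw [← ENNReal.ofReal_add (Real.exp_pos _).le (Real.exp_pos _).le, ← ENNReal.ofReal_mul (Real.exp_pos _).le]
      rw [Pi.one_apply, ← ENNReal.ofReal_one]
      refine ENNReal.ofReal_le_ofReal ?_
      have hk3 : 0 < κ / s ^ 3 := by positivity
      have h2 : κ * ε * s ≤ κ / s ^ 3 * |B (ζ, ω)| := by
        rw [← hkN]; gcongr
      have h3 : Real.exp (κ * ε * s) ≤ Real.exp (κ / s ^ 3 * B (ζ, ω)) + Real.exp (-(κ / s ^ 3) * B (ζ, ω)) := by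
        rcases abs_cases (B (ζ, ω)) with ⟨e, -⟩ | ⟨e, -⟩
        · rw [e] at h2
          have := Real.exp_le_exp.mpr h2
          linarith [Real.exp_pos (-(κ / s ^ 3) * B (ζ, ω))]
        · rw [e] at h2
          have := Real.exp_le_exp.mpr (h2.trans (le_of_eq (show _ = -(κ / s ^ 3) * B (ζ, ω) by ring)))
          linarith [Real.exp_pos ((κ / s ^ 3) * B (ζ, ω))]
      calc (1 : ℝ) = Real.exp (-(κ * ε * s)) * Real.exp (κ * ε * s) := by
            rw [← Real.exp_add]; simp
        _ ≤ _ := by gcongr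
    · rw [Set.indicator_of_notMem h]
      exact zero_le
  have hset : ∀ ζ, MeasurableSet {ω | ε * N ≤ |AA S (fun x => w x ζ) N ω - m * N|} := by
    intro ζ
    exact measurableSet_le measurable_const ((AA_meas hS _ _).sub_const _).abs
  calc _ = ∫⁻ ζ, ∫⁻ ω, Set.indicator {ω | ε * N ≤ |AA S (fun x => w x ζ) N ω - m * N|} 1 ω ∂(P 0) ∂μ := by
        refine lintegral_congr fun ζ => ?_
        rw [lintegral_indicator_one (hset ζ)]
    _ ≤ ∫⁻ ζ, ∫⁻ ω, ENNReal.ofReal (Real.exp (-(κ * ε * s))) *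
        (F (κ / s ^ 3) (ζ, ω) + F (-(κ / s ^ 3)) (ζ, ω)) ∂(P 0) ∂μ :=
        lintegral_mono fun ζ => lintegral_mono fun ω => hpt ζ ω
    _ = ENNReal.ofReal (Real.exp (-(κ * ε * s))) * (∫⁻ ζ, ∫⁻ ω, F (κ / s ^ 3) (ζ, ω) ∂(P 0) ∂μ +
        ∫⁻ ζ, ∫⁻ ω, F (-(κ / s ^ 3)) (ζ, ω) ∂(P 0) ∂μ) := by
        rw [← lintegral_add_left ((hFm _).lintegral_prod_right'), ← lintegral_const_mul _ (by
          exact ((hFm _).lintegral_prod_right').add ((hFm _).lintegral_prod_right'))]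
        refine lintegral_congr fun ζ => ?_
        have m1 : ∀ l, Measurable (fun ω => F l (ζ, ω)) := fun l => (hFm l).comp measurable_prodMk_left
        have m2 : Measurable (fun ω => F (κ / s ^ 3) (ζ, ω) + F (-(κ / s ^ 3)) (ζ, ω)) := (m1 _).add (m1 _)
        rw [lintegral_const_mul _ m2, lintegral_add_left (m1 _)]
    _ ≤ ENNReal.ofReal (Real.exp (-(κ * ε * s))) * (ENNReal.ofReal (2 * Real.exp 1) + ENNReal.ofReal (2 * Real.exp 1)) := by
        gcongr
    _ = _ := by
        rw [← ENNReal.ofReal_add (by positivity) (by positivity), ← ENNReal.ofReal_mul (by positivity)]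
        congr 1
        ring

lemma summable_aux (D : ℕ) {a : ℝ} (ha : 0 < a) :
    Summable (fun n : ℕ => ((n : ℝ) + 1) ^ D * Real.exp (-(a * Real.sqrt (Real.sqrt (n + 1 : ℕ))))) := by
  set M := 4 * (D + 2) with hM
  have hs : Summable (fun n : ℕ => (M.factorial / a ^ M : ℝ) * (1 / ((n + 1 : ℕ) : ℝ) ^ 2)) := by
    refine Summable.mul_left _ ?_
    have := (summable_nat_add_iff 1).mpr (Real.summable_one_div_nat_pow.mpr (by norm_num : 1 < 2))
    exact this
  refine Summable.of_nonneg_of_le (fun n => by positivity) (fun n => ?_) hs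
  set s : ℝ := Real.sqrt (Real.sqrt (n + 1 : ℕ)) with hs'
  have hs4 : s ^ 4 = (n + 1 : ℕ) := by
    rw [show s ^ 4 = (s ^ 2) ^ 2 by ring, Real.sq_sqrt (Real.sqrt_nonneg _), Real.sq_sqrt (by positivity)]
  have hs0 : 0 < s := Real.sqrt_pos.mpr (Real.sqrt_pos.mpr (by positivity))
  have h1 := Real.pow_div_factorial_le_exp (x := a * s) (by positivity) M
  rw [Real.exp_neg]
  have h2 : (Real.exp (a * s))⁻¹ ≤ ((a * s) ^ M / M.factorial)⁻¹ := by
    gcongr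
  have h3 : (a * s) ^ M = a ^ M * (((n : ℝ) + 1) ^ (D + 2)) := by
    rw [mul_pow, hM, pow_mul s 4, hs4]
    push_cast; ring
  calc _ ≤ ((n : ℝ) + 1) ^ D * ((a * s) ^ M / M.factorial)⁻¹ := by gcongr
    _ = _ := by
      rw [h3]
      push_cast
      rw [pow_add]
      field_simp

lemma conc_as (hd : 1 ≤ d) (hS : IsCTSRW (d + 1) P S) [IsProbabilityMeasure μ]
    {w : (Fin d → ℤ) → Ωz → ℝ} (hw : ∀ x, Measurable (w x)) (hi : iIndepFun w μ)
    {K m : ℝ} (hK : ∀ x ζ, w x ζ ∈ Set.Icc 0 K) (hm : ∀ x, ∫ ζ, w x ζ ∂μ = m)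
    {ε : ℝ} (hε : 0 < ε) (D : ℕ) :
    ∀ᵐ ζ ∂μ, Tendsto (fun n : ℕ => ENNReal.ofReal (((n : ℝ) + 1) ^ D) *
      P 0 {ω | ε * (n + 1 : ℕ) ≤ |AA S (fun x => w x ζ) (n + 1 : ℕ) ω - m * (n + 1 : ℕ)|}) atTop (nhds 0) := by
  have := hS.prob 0
  obtain ⟨κ, hκ, h⟩ := conc_bound hd hS hw hi hK hm
  have hmeas : ∀ n : ℕ, Measurable (fun ζ => P 0 {ω | ε * (n + 1 : ℕ) ≤ |AA S (fun x => w x ζ) (n + 1 : ℕ) ω - m * (n + 1 : ℕ)|}) := by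
    intro n
    have hs : MeasurableSet {p : Ωz × Ωw | ε * (n + 1 : ℕ) ≤ |AA S (fun x => w x p.1) (n + 1 : ℕ) p.2 - m * (n + 1 : ℕ)|} :=
      measurableSet_le measurable_const ((AA_joint_meas hS hw _).sub_const _).abs
    exact measurable_measure_prodMk_left hs
  have hsum : ∫⁻ ζ, ∑' n : ℕ, ENNReal.ofReal (((n : ℝ) + 1) ^ D) *
      P 0 {ω | ε * (n + 1 : ℕ) ≤ |AA S (fun x => w x ζ) (n + 1 : ℕ) ω - m * (n + 1 : ℕ)|} ∂μ ≠ ⊤ := by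
    rw [lintegral_tsum (fun n => ((hmeas n).const_mul _).aemeasurable)]
    refine ne_top_of_le_ne_top ?_ (ENNReal.tsum_le_tsum (g := fun n : ℕ => ENNReal.ofReal ((4 * Real.exp 1) *
      (((n : ℝ) + 1) ^ D * Real.exp (-(κ * ε * Real.sqrt (Real.sqrt (n + 1 : ℕ))))))) fun n => ?_)
    · exact ((summable_aux D (mul_pos hκ hε)).mul_left _).tsum_ofReal_ne_top
    · rw [lintegral_const_mul _ (hmeas n)]
      refine (mul_le_mul_right (h ε hε n) _).trans (le_of_eq ?_)
      rw [← ENNReal.ofReal_mul (by positivity)]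
      congr 1
      ring
  have hae := ae_lt_top' (AEMeasurable.tsum fun n => ((hmeas n).const_mul _).aemeasurable) hsum
  filter_upwards [hae] with ζ hζ
  exact ENNReal.tendsto_atTop_zero_of_tsum_ne_top hζ.ne

end walk

open MeasureTheory ProbabilityTheory Filter Set

section hopf
variable {X : Type*} [AddCommGroup X] [Countable X]

/-- action of a kernel on functions -/
noncomputable def kact (p : X → X → ENNReal) (h : X → ENNReal) (x : X) : ENNReal := ∑' y, p x y * h y

noncomputable def Sn (r p : X → X → ENNReal) (g : X → ENNReal) : ℕ → X → ENNReal
  | 0 => fun _ => 0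
  | n + 1 => fun x => kact r g x + kact p (Sn r p g n) x

noncomputable def Mn (r p : X → X → ENNReal) (l : ENNReal) (g : X → ENNReal) : ℕ → X → ENNReal
  | 0 => fun _ => 0
  | n + 1 => fun x => kact r g x + kact p (Mn r p l g n) x - l

lemma kact_mono (p : X → X → ENNReal) {h h' : X → ENNReal} (hh : ∀ x, h x ≤ h' x) (x : X) :
    kact p h x ≤ kact p h' x :=
  ENNReal.tsum_le_tsum fun y => by gcongr; exact hh y

lemma kact_add_const {p : X → X → ENNReal} (hp : ∀ x, ∑' y, p x y = 1) (h : X → ENNReal) (c : ENNReal)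
    (x : X) : kact p (fun y => h y + c) x = kact p h x + c := by
  unfold kact
  simp only [mul_add]
  rw [ENNReal.tsum_add, ENNReal.tsum_mul_right, hp, one_mul]

lemma kact_trans {p : X → X → ENNReal} (hp : ∀ x y a, p (x + a) (y + a) = p x y) (h : X → ENNReal)
    (a x : X) : kact p h (x + a) = kact p (fun y => h (y + a)) x := by
  unfold kact
  rw [← (Equiv.addRight a).tsum_eq]
  simp [hp]

lemma kact_meas (p : X → X → ENNReal) {Ω : Type*} [MeasurableSpace Ω] {h : Ω → X → ENNReal}
    (hh : ∀ x, Measurable (fun g => h g x)) (x : X) : Measurable (fun g => kact p (h g) x) := by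
  unfold kact
  exact Measurable.tsum fun y => (hh y).const_mul _

lemma Sn_le_Mn {r p : X → X → ENNReal} (hp : ∀ x, ∑' y, p x y = 1) (l : ENNReal) (g : X → ENNReal)
    (n : ℕ) (x : X) : Sn r p g n x ≤ Mn r p l g n x + n * l := by
  induction n generalizing x with
  | zero => simp [Sn]
  | succ n ih =>
    simp only [Sn, Mn]
    calc _ ≤ kact r g x + kact p (fun y => Mn r p l g n y + n * l) x := by
          gcongr
          exact kact_mono p ih x
      _ = (kact r g x + kact p (Mn r p l g n) x) + n * l := by
          rw [kact_add_const hp, add_assoc]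
      _ ≤ (kact r g x + kact p (Mn r p l g n) x - l + l) + n * l := by
          exact add_le_add le_tsub_add le_rfl
      _ = _ := by push_cast; ring

lemma Mn_mono (r p : X → X → ENNReal) (l : ENNReal) (g : X → ENNReal) (x : X) :
    Monotone (fun n => Mn r p l g n x) := by
  have : ∀ n x, Mn r p l g n x ≤ Mn r p l g (n + 1) x := by
    intro n
    induction n with
    | zero => intro x; simp [Mn]
    | succ n ih =>
      intro x
      simp only [Mn]
      gcongr
      exact kact_mono p ih x
  exact monotone_nat_of_le_succ fun n => this n x

lemma Mn_trans {r p : X → X → ENNReal} (hr : ∀ x y a, r (x + a) (y + a) = r x y)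
    (hp : ∀ x y a, p (x + a) (y + a) = p x y) (l : ENNReal) (g : X → ENNReal) (a : X) (n : ℕ) (x : X) :
    Mn r p l g n (x + a) = Mn r p l (fun y => g (y + a)) n x := by
  induction n generalizing x with
  | zero => rfl
  | succ n ih =>
    simp only [Mn]
    rw [kact_trans hr, kact_trans hp]
    simp only [ih]

lemma Mn_meas (r p : X → X → ENNReal) (l : ENNReal) (n : ℕ) (x : X) :
    Measurable (fun g : X → ENNReal => Mn r p l g n x) := by
  induction n generalizing x with
  | zero => exact measurable_const
  | succ n ih =>
    simp only [Mn]
    exact ((kact_meas r (fun x => measurable_pi_apply x) x).add (kact_meas p ih x)).sub_const l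

lemma Mn_step (r p : X → X → ENNReal) {l : ENNReal} (g : X → ENNReal) (n : ℕ) (x : X) :
    Mn r p l g (n + 1) x + l * (if 0 < Mn r p l g (n + 1) x then 1 else 0) ≤
      kact r g x + kact p (Mn r p l g (n + 1)) x := by
  have h : kact r g x + kact p (Mn r p l g n) x ≤ kact r g x + kact p (Mn r p l g (n + 1)) x := by
    gcongr
    exact kact_mono p (fun y => Mn_mono r p l g y (Nat.le_succ n)) x
  refine le_trans ?_ h
  split_ifs with h0
  · simp only [Mn] at h0 ⊢
    rw [mul_one, tsub_add_cancel_of_le]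
    exact (tsub_pos_iff_lt.mp h0).le
  · simp only [mul_zero, add_zero, Mn]
    exact tsub_le_self

variable {Ωz : Type*} [MeasurableSpace Ωz] {μ : Measure Ωz}

lemma hopf [IsProbabilityMeasure μ] {r p : X → X → ENNReal} (hr : ∀ x y a, r (x + a) (y + a) = r x y)
    (hp : ∀ x y a, p (x + a) (y + a) = p x y) (hr1 : ∀ x, ∑' y, r x y = 1) (hp1 : ∀ x, ∑' y, p x y = 1)
    {g : X → Ωz → ENNReal} (hg : ∀ x, Measurable (g x))
    (hst : ∀ (a : X) (Φ : (X → ENNReal) → ENNReal), Measurable Φ →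
      ∫⁻ ζ, Φ (fun x => g (x + a) ζ) ∂μ = ∫⁻ ζ, Φ (fun x => g x ζ) ∂μ)
    {e : ENNReal} (he : ∫⁻ ζ, g 0 ζ ∂μ = e) (het : e ≠ ⊤) (l : ENNReal) :
    l * μ {ζ | ∃ n : ℕ, n * l < Sn r p (fun x => g x ζ) n 0} ≤ e := by
  have hgm : Measurable (fun ζ x => g x ζ) := measurable_pi_lambda _ fun x => hg x
  have hgx : ∀ x, ∫⁻ ζ, g x ζ ∂μ = e := by
    intro x
    have := hst x (fun h => h 0) (measurable_pi_apply _)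
    simp only [zero_add] at this
    rw [this, he]
  have hMm : ∀ n x, Measurable (fun ζ => Mn r p l (fun x => g x ζ) n x) := fun n x =>
    (Mn_meas r p l n x).comp hgm
  have hMst : ∀ n x, ∫⁻ ζ, Mn r p l (fun x => g x ζ) n x ∂μ = ∫⁻ ζ, Mn r p l (fun x => g x ζ) n 0 ∂μ := by
    intro n x
    rw [← hst x (fun h => Mn r p l h n 0) (Mn_meas r p l n 0)]
    refine lintegral_congr fun ζ => ?_
    have := Mn_trans hr hp l (fun y => g y ζ) x n 0
    rw [zero_add] at this
    exact this
  have hact : ∀ {q : X → X → ENNReal}, (∀ x, ∑' y, q x y = 1) → ∀ (h : Ωz → X → ENNReal),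
      (∀ x, Measurable (fun ζ => h ζ x)) → ∀ c, (∀ x, ∫⁻ ζ, h ζ x ∂μ = c) → ∀ x,
      ∫⁻ ζ, kact q (h ζ) x ∂μ = c := by
    intro q hq h hm c hc x
    unfold kact
    rw [lintegral_tsum fun y => ((hm y).const_mul _).aemeasurable]
    simp only [lintegral_const_mul _ (hm _), hc]
    rw [ENNReal.tsum_mul_right, hq, one_mul]
  have hfin : ∀ n, ∫⁻ ζ, Mn r p l (fun x => g x ζ) n 0 ∂μ ≠ ⊤ := by
    intro n
    induction n with
    | zero => simp [Mn]
    | succ n ih =>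
      have : ∫⁻ ζ, Mn r p l (fun x => g x ζ) (n + 1) 0 ∂μ ≤
          ∫⁻ ζ, (kact r (fun x => g x ζ) 0 + kact p (Mn r p l (fun x => g x ζ) n) 0) ∂μ :=
        lintegral_mono fun ζ => tsub_le_self
      refine ne_top_of_le_ne_top ?_ this
      rw [lintegral_add_left (kact_meas r hg 0), hact hr1 (fun ζ x => g x ζ) hg e hgx,
        hact hp1 (fun ζ x => Mn r p l (fun x => g x ζ) n x) (hMm n) _ (hMst n)]
      exact ENNReal.add_ne_top.mpr ⟨het, ih⟩
  have hpos : ∀ n, l * μ {ζ | 0 < Mn r p l (fun x => g x ζ) n 0} ≤ e := by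
    intro n
    cases n with
    | zero => simp [Mn]
    | succ n =>
      set M := ∫⁻ ζ, Mn r p l (fun x => g x ζ) (n + 1) 0 ∂μ with hM
      have hset : MeasurableSet {ζ | 0 < Mn r p l (fun x => g x ζ) (n + 1) 0} :=
        measurableSet_lt measurable_const (hMm _ _)
      have h1 : ∫⁻ ζ, (Mn r p l (fun x => g x ζ) (n + 1) 0 +
          l * Set.indicator {ζ | 0 < Mn r p l (fun x => g x ζ) (n + 1) 0} 1 ζ) ∂μ ≤
          ∫⁻ ζ, (kact r (fun x => g x ζ) 0 + kact p (Mn r p l (fun x => g x ζ) (n + 1)) 0) ∂μ := by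
        refine lintegral_mono fun ζ => ?_
        refine le_trans (le_of_eq ?_) (Mn_step r p (l := l) (fun x => g x ζ) n 0)
        congr 2
        by_cases h : 0 < Mn r p l (fun x => g x ζ) (n + 1) 0
        · rw [if_pos h]
          exact Set.indicator_of_mem (s := {ζ | 0 < Mn r p l (fun x => g x ζ) (n + 1) 0}) h 1
        · rw [if_neg h]
          exact Set.indicator_of_notMem (s := {ζ | 0 < Mn r p l (fun x => g x ζ) (n + 1) 0}) h 1
      rw [lintegral_add_left (hMm _ _), lintegral_const_mul _ (measurable_one.indicator hset),
        lintegral_indicator_one hset, lintegral_add_left (kact_meas r hg 0),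
        hact hr1 (fun ζ x => g x ζ) hg e hgx,
        hact hp1 (fun ζ x => Mn r p l (fun x => g x ζ) (n + 1) x) (hMm (n + 1)) _ (hMst (n + 1)),
        add_comm e] at h1
      exact (ENNReal.add_le_add_iff_left (hfin (n + 1))).mp h1
  have hsub : {ζ | ∃ n : ℕ, n * l < Sn r p (fun x => g x ζ) n 0} ⊆
      ⋃ n, {ζ | 0 < Mn r p l (fun x => g x ζ) n 0} := by
    rintro ζ ⟨n, hn⟩
    refine mem_iUnion.mpr ⟨n, ?_⟩
    by_contra h0
    have h0' : Mn r p l (fun x => g x ζ) n 0 = 0 := by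
      simpa using h0
    have := Sn_le_Mn (r := r) hp1 l (fun x => g x ζ) n 0
    rw [h0', zero_add] at this
    exact absurd hn (not_lt.mpr this)
  have hmono : Monotone fun n => {ζ | 0 < Mn r p l (fun x => g x ζ) n 0} := by
    intro a b hab ζ hζ
    exact lt_of_lt_of_le hζ (Mn_mono r p l (fun x => g x ζ) 0 hab)
  refine (mul_le_mul_right (measure_mono hsub) l).trans ?_
  rw [hmono.measure_iUnion, ENNReal.mul_iSup]
  exact iSup_le hpos

end hopf

section stat
variable {d : ℕ} {α : ℝ} {Ωz : Type*} [MeasurableSpace Ωz] {μ : Measure Ωz} {z : (Fin d → ℤ) → Ωz → ℝ}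

lemma scenery_stat (hz : IsScenery d α μ z) {φ : ℝ → ENNReal} (hφ : Measurable φ) (a : Fin d → ℤ)
    (Φ : ((Fin d → ℤ) → ENNReal) → ENNReal) (hΦ : Measurable Φ) :
    ∫⁻ ζ, Φ (fun x => φ (z (x + a) ζ)) ∂μ = ∫⁻ ζ, Φ (fun x => φ (z x ζ)) ∂μ := by
  have := hz.prob
  have h1 := (iIndepFun_iff_map_fun_eq_infinitePi_map (P := μ) (X := z) hz.meas).mp hz.indep
  have h2 := (iIndepFun_iff_map_fun_eq_infinitePi_map (P := μ) (X := fun x => z (x + a))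
    (fun x => hz.meas _)).mp (hz.indep.precomp (g := fun x => x + a) (add_left_injective a))
  have e1 : ∀ x, μ.map (z x) = μ.map (z 0) := fun x => (hz.ident x).map_eq
  simp only [e1] at h1 h2
  have hF : Measurable (fun f : (Fin d → ℤ) → ℝ => Φ (fun x => φ (f x))) :=
    hΦ.comp (measurable_pi_lambda _ fun x => hφ.comp (measurable_pi_apply x))
  have l1 := lintegral_map (μ := μ) hF (measurable_pi_lambda (fun ζ x => z x ζ) hz.meas)
  have l2 := lintegral_map (μ := μ) hF (measurable_pi_lambda (fun ζ x => z (x + a) ζ) (fun x => hz.meas (x + a)))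
  rw [h1] at l1
  rw [h2] at l2
  rw [← l1, ← l2]

end stat

open MeasureTheory ProbabilityTheory Filter Set

/-- Green-type kernel up to time `N` -/
noncomputable def rN (d : ℕ) (N : ℝ) (x y : Fin d → ℤ) : ENNReal := ∫⁻ u in Ioc 0 N, pE d u x y

section rN
variable {d : ℕ} {Ωw : Type*} [MeasurableSpace Ωw]
  {P : (Fin (d + 1) → ℤ) → Measure Ωw} {S : ℝ → Ωw → (Fin (d + 1) → ℤ)}

lemma pE_meas (hd : 1 ≤ d) (x y : Fin d → ℤ) : Measurable (fun u => pE d u x y) := by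
  unfold pE
  simp only [heat_eq_prod hd]
  refine ENNReal.measurable_ofReal.comp ?_
  exact Finset.measurable_prod _ fun i _ => kk_measurable _

lemma rN_trans (hd : 1 ≤ d) (N : ℝ) (x y a : Fin d → ℤ) : rN d N (x + a) (y + a) = rN d N x y := by
  unfold rN
  refine setLIntegral_congr_fun measurableSet_Ioc fun u hu => ?_
  exact pE_trans hd hu.1.le x y a

lemma rN_sum (hd : 1 ≤ d) (x : Fin d → ℤ) : ∑' y, rN d 1 x y = 1 := by
  unfold rN
  rw [← lintegral_tsum fun y => (pE_meas hd x y).aemeasurable]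
  rw [setLIntegral_congr_fun measurableSet_Ioc (g := fun _ => 1) fun u hu => pE_sum hd hu.1.le x]
  simp

lemma rN_succ (hd : 1 ≤ d) (hS : IsCTSRW (d + 1) P S) (n : ℕ) (x y : Fin d → ℤ) :
    rN d ((n + 1 : ℕ) : ℝ) x y = rN d 1 x y + ∑' a, pE d 1 x a * rN d n a y := by
  have h1 : ∑' a, pE d 1 x a * rN d n a y = ∫⁻ u in Ioc 0 (n : ℝ), pE d (1 + u) x y := by
    unfold rN
    simp only [← lintegral_const_mul _ (pE_meas hd _ _)]
    rw [← lintegral_tsum fun a => ((pE_meas hd _ _).const_mul _).aemeasurable]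
    refine setLIntegral_congr_fun measurableSet_Ioc fun u hu => ?_
    exact pE_CK hd hS zero_le_one hu.1.le x y
  have h2 : ∫⁻ u in Ioc 0 (n : ℝ), pE d (1 + u) x y = ∫⁻ u in Ioc 1 ((n + 1 : ℕ) : ℝ), pE d u x y := by
    rw [← (measurePreserving_add_left volume (1 : ℝ)).setLIntegral_comp_preimage
      measurableSet_Ioc (pE_meas hd x y)]
    congr 2
    ext u
    simp only [mem_preimage, mem_Ioc, Nat.cast_add, Nat.cast_one]
    constructor <;> rintro ⟨h, h'⟩ <;> constructor <;> linarith
  rw [h1, h2]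
  unfold rN
  rw [← lintegral_union measurableSet_Ioc, Ioc_union_Ioc_eq_Ioc zero_le_one (by simp)]
  exact disjoint_left.mpr fun u hu hu' => absurd hu.2 (not_le.mpr hu'.1)

lemma Sn_eq (hd : 1 ≤ d) (hS : IsCTSRW (d + 1) P S) (g : (Fin d → ℤ) → ENNReal) (n : ℕ) (x : Fin d → ℤ) :
    Sn (rN d 1) (pE d 1) g n x = ∑' y, rN d n x y * g y := by
  induction n generalizing x with
  | zero => simp [Sn, rN]
  | succ n ih =>
    simp only [Sn, kact, ih, rN_succ hd hS n, add_mul]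
    rw [ENNReal.tsum_add]
    congr 1
    simp only [← ENNReal.tsum_mul_left, ← ENNReal.tsum_mul_right]
    rw [ENNReal.tsum_comm]
    simp only [mul_assoc]

end rN

section max
variable {d : ℕ} {α : ℝ} {Ωz Ωw : Type*} [MeasurableSpace Ωz] [MeasurableSpace Ωw] {μ : Measure Ωz}
  {z : (Fin d → ℤ) → Ωz → ℝ}
  {P : (Fin (d + 1) → ℤ) → Measure Ωw} {S : ℝ → Ωw → (Fin (d + 1) → ℤ)}

lemma max_as (hd : 1 ≤ d) (hS : IsCTSRW (d + 1) P S) (hz : IsScenery d α μ z) (hint : Integrable (z 0) μ)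
    {δ : ENNReal} (hδ : δ ≠ 0) (hδ' : δ ≠ ⊤) :
    ∀ᵐ ζ ∂μ, ∃ K : ℕ, ∀ n : ℕ, ∑' x, rN d n 0 x * ENNReal.ofReal (z x ζ - K) ≤ n * δ := by
  have := hz.prob
  have hfin : ∫⁻ ζ, ENNReal.ofReal (z 0 ζ) ∂μ ≠ ⊤ := hint.lintegral_lt_top.ne
  have hm : ∀ K : ℕ, Measurable (fun r : ℝ => ENNReal.ofReal (r - K)) := fun K => by fun_prop
  have he : Tendsto (fun K : ℕ => ∫⁻ ζ, ENNReal.ofReal (z 0 ζ - K) ∂μ) atTop (nhds 0) := by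
    rw [← lintegral_zero (μ := μ)]
    refine tendsto_lintegral_of_dominated_convergence (fun ζ => ENNReal.ofReal (z 0 ζ))
      (fun K => (hm K).comp (hz.meas 0)) (fun K => ?_) hfin ?_
    · refine Eventually.of_forall fun ζ => ENNReal.ofReal_le_ofReal ?_
      simp
    · refine Eventually.of_forall fun ζ => ?_
      refine tendsto_const_nhds.congr' ?_
      filter_upwards [eventually_ge_atTop ⌈z 0 ζ⌉₊] with K hK
      symm
      rw [ENNReal.ofReal_eq_zero]
      have := Nat.le_of_ceil_le hK
      linarith
  set B : ℕ → Set Ωz := fun K => {ζ | ∃ n : ℕ, n * δ < Sn (rN d 1) (pE d 1) (fun x => ENNReal.ofReal (z x ζ - K)) n 0}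
    with hB
  have hb : ∀ K, δ * μ (B K) ≤ ∫⁻ ζ, ENNReal.ofReal (z 0 ζ - K) ∂μ := by
    intro K
    refine hopf (g := fun x ζ => ENNReal.ofReal (z x ζ - K)) (rN_trans hd 1) (pE_trans hd zero_le_one)
      (rN_sum hd) (pE_sum hd zero_le_one) (fun x => (hm K).comp (hz.meas x))
      (fun a Φ hΦ => scenery_stat hz (hm K) a Φ hΦ) rfl ?_ δ
    refine ne_top_of_le_ne_top hfin (lintegral_mono fun ζ => ENNReal.ofReal_le_ofReal ?_)
    simp
  have h0 : δ * μ (⋂ K, B K) ≤ 0 := by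
    refine ge_of_tendsto' he fun K => le_trans ?_ (hb K)
    exact mul_le_mul_right (measure_mono (iInter_subset _ K)) δ
  have h1 : μ (⋂ K, B K) = 0 := by
    have := le_antisymm h0 (zero_le)
    rcases mul_eq_zero.mp this with h | h
    · exact absurd h hδ
    · exact h
  have h2 : ∀ᵐ ζ ∂μ, ζ ∉ ⋂ K, B K := measure_eq_zero_iff_ae_notMem.mp h1
  filter_upwards [h2] with ζ hζ
  rw [mem_iInter, not_forall] at hζ
  obtain ⟨K, hK⟩ := hζ
  refine ⟨K, fun n => ?_⟩
  by_contra hc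
  refine hK ⟨n, ?_⟩
  rw [Sn_eq hd hS]
  exact not_le.mp hc

end max

open MeasureTheory ProbabilityTheory Filter Set

section bridge
variable {d : ℕ} {Ωw : Type*} [MeasurableSpace Ωw]
  {P : (Fin (d + 1) → ℤ) → Measure Ωw} {S : ℝ → Ωw → (Fin (d + 1) → ℤ)}

lemma occ_total (hd : 1 ≤ d) (hS : IsCTSRW (d + 1) P S) (g : (Fin d → ℤ) → ENNReal) (N : ℝ) :
    ∫⁻ ω, (∫⁻ u in Ioc 0 N, g (Yp S u ω)) ∂(P 0) = ∑' x, rN d N 0 x * g x := by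
  have := hS.prob 0
  have hm : Measurable (fun p : Ωw × ℝ => g (Yp S p.2 p.1)) := (wY_meas hS g).comp measurable_swap
  rw [lintegral_lintegral_swap hm.aemeasurable]
  have h1 : ∫⁻ u in Ioc 0 N, ∫⁻ ω, g (Yp S u ω) ∂(P 0) = ∫⁻ u in Ioc 0 N, ∑' x, pE d u 0 x * g x := by
    refine setLIntegral_congr_fun measurableSet_Ioc fun u hu => ?_
    rw [lintegral_comp_eq_tsum (P 0) (Y_meas hS u)]
    refine tsum_congr fun x => ?_
    rw [← Y_law_one hd hS hu.1.le, mul_comm]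
    rfl
  rw [h1, lintegral_tsum fun x => ((pE_meas hd 0 x).mul_const _).aemeasurable]
  simp only [lintegral_mul_const _ (pE_meas hd _ _)]
  rfl

lemma pE_bridge_le (hd : 1 ≤ d) {u t : ℝ} (hu : 0 ≤ u) (hut : u ≤ t) (x : Fin d → ℤ) :
    pE d u 0 x * pE d (t - u) x 0 ≤ ENNReal.ofReal (kk (t / 2) 0 ^ d) * (pE d u 0 x + pE d (t - u) 0 x) := by
  have key : ∀ {s : ℝ} (_ : t / 2 ≤ s) (x y : Fin d → ℤ), pE d s x y ≤ ENNReal.ofReal (kk (t / 2) 0 ^ d) := by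
    intro s hs x y
    refine (pE_le_diag hd (by linarith) x y).trans (ENNReal.ofReal_le_ofReal ?_)
    exact pow_le_pow_left₀ (kk_nonneg (by linarith) 0) (kk_anti hs) d
  rw [mul_add]
  rcases le_total (t / 2) u with h | h
  · refine le_trans ?_ le_add_self
    rw [pE_comm hd (by linarith) 0 x, pE_comm hd (by linarith) 0 x]
    gcongr
    exact key h _ _
  · refine le_trans ?_ le_self_add
    rw [mul_comm]
    gcongr
    exact key (by linarith) _ _

lemma bridge (hd : 1 ≤ d) (hS : IsCTSRW (d + 1) P S) (g : (Fin d → ℤ) → ENNReal) {t N : ℝ} (ht : 0 ≤ t)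
    (hN : t ≤ N) :
    ∫⁻ ω in {ω | Yp S t ω = 0}, (∫⁻ u in Ioc 0 t, g (Yp S u ω)) ∂(P 0) ≤
      2 * ENNReal.ofReal (kk (t / 2) 0 ^ d) * ∑' x, rN d N 0 x * g x := by
  have := hS.prob 0
  set c := ENNReal.ofReal (kk (t / 2) 0 ^ d) with hc
  have hm : Measurable (fun p : Ωw × ℝ => g (Yp S p.2 p.1)) := (wY_meas hS g).comp measurable_swap
  have hD : MeasurableSet {ω | Yp S t ω = 0} := (Y_meas hS t) (measurableSet_singleton 0)
  rw [lintegral_lintegral_swap hm.aemeasurable]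
  have h1 : ∫⁻ u in Ioc 0 t, ∫⁻ ω in {ω | Yp S t ω = 0}, g (Yp S u ω) ∂(P 0) ≤
      ∫⁻ u in Ioc 0 t, ∑' x, c * (pE d u 0 x + pE d (t - u) 0 x) * g x := by
    refine setLIntegral_mono' measurableSet_Ioc fun u hu => ?_
    rw [lintegral_comp_eq_tsum _ (Y_meas hS u)]
    refine ENNReal.tsum_le_tsum fun x => ?_
    rw [Measure.restrict_apply ((Y_meas hS u) (measurableSet_singleton x)), mul_comm]
    gcongr
    refine le_trans (le_of_eq ?_) (pE_bridge_le hd hu.1.le hu.2 x)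
    rw [← Y_law_two hd hS hu.1.le (sub_nonneg.mpr hu.2), add_sub_cancel]
    rfl
  refine h1.trans ?_
  have hm2 : ∀ x, Measurable (fun u => pE d (t - u) 0 x) := fun x =>
    (pE_meas hd 0 x).comp (by fun_prop : Measurable fun u : ℝ => t - u)
  have hm3 : ∀ x, Measurable (fun u => pE d u 0 x + pE d (t - u) 0 x) := fun x =>
    (pE_meas hd 0 x).add (hm2 x)
  rw [lintegral_tsum fun x =>
    (((hm3 x).const_mul c).mul_const _).aemeasurable, ← ENNReal.tsum_mul_left]
  refine ENNReal.tsum_le_tsum fun x => ?_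
  rw [lintegral_mul_const _ ((hm3 x).const_mul c),
    lintegral_const_mul c (hm3 x), lintegral_add_left (pE_meas hd 0 x)]
  have h2 : ∫⁻ u in Ioc 0 t, pE d (t - u) 0 x = ∫⁻ u in Ioc 0 t, pE d u 0 x := by
    rw [setLIntegral_congr Ioo_ae_eq_Ioc.symm, setLIntegral_congr Ioo_ae_eq_Ioc.symm,
      ← (Measure.measurePreserving_sub_left volume t).setLIntegral_comp_preimage measurableSet_Ioo (pE_meas hd 0 x)]
    congr 2
    ext u
    simp only [mem_preimage, mem_Ioo]
    constructor <;> rintro ⟨h, h'⟩ <;> constructor <;> linarith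
  have h3 : ∫⁻ u in Ioc 0 t, pE d u 0 x ≤ rN d N 0 x :=
    lintegral_mono_set (Ioc_subset_Ioc_right hN)
  rw [h2, ← two_mul, ← mul_assoc, mul_comm c 2, ← mul_assoc]
  gcongr

end bridge

open MeasureTheory ProbabilityTheory Filter Set

section quenched
variable {d : ℕ} {Ωw : Type*} [MeasurableSpace Ωw]
  {P : (Fin (d + 1) → ℤ) → Measure Ωw} {S : ℝ → Ωw → (Fin (d + 1) → ℤ)}

/-- concentration of the truncated clock -/
def G1 (P : (Fin (d + 1) → ℤ) → Measure Ωw) (S : ℝ → Ωw → (Fin (d + 1) → ℤ)) (mK : ℕ → ℝ)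
    (v : (Fin d → ℤ) → ℝ) : Prop :=
  ∀ K j : ℕ, Tendsto (fun n : ℕ => ENNReal.ofReal ((n : ℝ) ^ (d + 1)) *
    P 0 {ω | 1 / ((j : ℝ) + 1) * n ≤ |AA S (fun x => min (v x) K) n ω - mK K * n|}) atTop (nhds 0)

/-- maximal bound for the excess over the truncation level -/
def G2 (v : (Fin d → ℤ) → ℝ) : Prop :=
  ∀ j : ℕ, ∃ K : ℕ, ∀ n : ℕ, ∑' x, rN d n 0 x * ENNReal.ofReal (v x - K) ≤
    n * ENNReal.ofReal (1 / ((j : ℝ) + 1))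

lemma path_meas (hS : IsCTSRW (d + 1) P S) {β : Type*} [MeasurableSpace β] (w : (Fin d → ℤ) → β) (ω : Ωw) :
    Measurable (fun u => w (Yp S u ω)) := (wY_meas hS w).comp measurable_prodMk_right

lemma bdd_int (hS : IsCTSRW (d + 1) P S) {w : (Fin d → ℤ) → ℝ} {K : ℝ} (hK : ∀ x, w x ∈ Icc 0 K) (ω : Ωw)
    (t : ℝ) : IntegrableOn (fun u => w (Yp S u ω)) (Ioc 0 t) := by
  refine Measure.integrableOn_of_bounded (M := K) (by simp) (path_meas hS w ω).aestronglyMeasurable ?_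
  refine Eventually.of_forall fun u => ?_
  rw [Real.norm_of_nonneg (hK _).1]
  exact (hK _).2

lemma ofReal_excess {a K : ℝ} : ENNReal.ofReal (a - K) = ENNReal.ofReal (max (a - K) 0) := by
  rw [ENNReal.ofReal_max, ENNReal.ofReal_zero]
  simp

lemma int_as (hd : 1 ≤ d) (hS : IsCTSRW (d + 1) P S) {v : (Fin d → ℤ) → ℝ} (hv : ∀ x, 0 ≤ v x) (h2 : G2 v) :
    ∀ᵐ ω ∂(P 0), ∀ t : ℝ, IntegrableOn (fun u => v (Yp S u ω)) (Ioc 0 t) := by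
  obtain ⟨K, hK⟩ := h2 0
  have h : ∀ n : ℕ, ∀ᵐ ω ∂(P 0), ∫⁻ u in Ioc 0 (n : ℝ), ENNReal.ofReal (v (Yp S u ω) - K) < ⊤ := by
    intro n
    have hm : Measurable (fun ω => ∫⁻ u in Ioc 0 (n : ℝ), ENNReal.ofReal (v (Yp S u ω) - K)) :=
      Measurable.lintegral_prod_left' (f := fun p : ℝ × Ωw => ENNReal.ofReal (v (Yp S p.1 p.2) - K))
        (wY_meas hS (fun x => ENNReal.ofReal (v x - K)))
    refine ae_lt_top hm ?_
    rw [occ_total hd hS (fun x => ENNReal.ofReal (v x - K))]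
    exact ne_top_of_le_ne_top (ENNReal.mul_ne_top (by simp) (by simp)) (hK n)
  filter_upwards [ae_all_iff.mpr h] with ω hω t
  have h3 := hω ⌈t⌉₊
  have hi : IntegrableOn (fun u => max (v (Yp S u ω) - K) 0 + K) (Ioc 0 (⌈t⌉₊ : ℝ)) := by
    refine Integrable.add ?_ (integrable_const _)
    refine ⟨(path_meas hS (fun x => max (v x - K) 0) ω).aestronglyMeasurable, ?_⟩
    have h0 : 0 ≤ᵐ[volume.restrict (Ioc 0 (⌈t⌉₊ : ℝ))] fun u => max (v (Yp S u ω) - K) 0 :=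
      Eventually.of_forall fun _ => le_max_right _ _
    refine (hasFiniteIntegral_iff_ofReal h0).mpr ?_
    simpa only [← ofReal_excess] using h3
  refine IntegrableOn.mono_set ?_ (Ioc_subset_Ioc_right (Nat.le_ceil t))
  refine Integrable.mono' hi (path_meas hS v ω).aestronglyMeasurable (Eventually.of_forall fun u => ?_)
  rw [Real.norm_of_nonneg (hv _)]
  have := le_max_left (v (Yp S u ω) - K) 0
  linarith

lemma min_mem {v : (Fin d → ℤ) → ℝ} (hv : ∀ x, 0 ≤ v x) (K : ℕ) (x : Fin d → ℤ) : min (v x) K ∈ Icc (0 : ℝ) K :=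
  ⟨le_min (hv x) (Nat.cast_nonneg K), min_le_right _ _⟩

lemma AA_lower (hS : IsCTSRW (d + 1) P S) {v : (Fin d → ℤ) → ℝ} (hv : ∀ x, 0 ≤ v x) {ω : Ωw}
    {s t : ℝ} (hi : IntegrableOn (fun u => v (Yp S u ω)) (Ioc 0 t)) (hst : s ≤ t) (K : ℕ) :
    AA S (fun x => min (v x) K) s ω ≤ AA S v t ω := by
  unfold AA
  refine (setIntegral_mono_on (bdd_int hS (min_mem hv K) ω s) (hi.mono_set (Ioc_subset_Ioc_right hst))
    measurableSet_Ioc fun u _ => min_le_left _ _).trans ?_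
  exact setIntegral_mono_set hi (Eventually.of_forall fun u => hv _)
    (Ioc_subset_Ioc_right hst).eventuallyLE

lemma AA_upper (hS : IsCTSRW (d + 1) P S) {v : (Fin d → ℤ) → ℝ} (hv : ∀ x, 0 ≤ v x) {ω : Ωw}
    {s t : ℝ} (hi : IntegrableOn (fun u => v (Yp S u ω)) (Ioc 0 t)) (hst : t ≤ s) (K : ℕ) :
    AA S v t ω ≤ AA S (fun x => min (v x) K) s ω +
      (∫⁻ u in Ioc 0 t, ENNReal.ofReal (v (Yp S u ω) - K)).toReal := by
  have hb := bdd_int hS (min_mem hv K) ω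
  have hx : IntegrableOn (fun u => v (Yp S u ω) - min (v (Yp S u ω)) K) (Ioc 0 t) := hi.sub (hb t)
  have e : ∀ a : ℝ, max (a - K) 0 = a - min a K := by
    intro a
    rcases le_total a K with h | h
    · rw [min_eq_left h, max_eq_right (by linarith)]; simp
    · rw [min_eq_right h, max_eq_left (by linarith)]
  have h1 : (∫⁻ u in Ioc 0 t, ENNReal.ofReal (v (Yp S u ω) - K)).toReal =
      ∫ u in Ioc 0 t, (v (Yp S u ω) - min (v (Yp S u ω)) K) := by
    rw [integral_eq_lintegral_of_nonneg_ae
      (Eventually.of_forall fun u => sub_nonneg.mpr (min_le_left _ _)) hx.1]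
    simp only [ofReal_excess, e]
  have h2 : ∫ u in Ioc 0 t, min (v (Yp S u ω)) K ≤ AA S (fun x => min (v x) K) s ω :=
    setIntegral_mono_set (hb s) (Eventually.of_forall fun u => (min_mem hv K _).1)
      (Ioc_subset_Ioc_right hst).eventuallyLE
  rw [h1, integral_sub hi (hb t)]
  unfold AA at h2 ⊢
  linarith

lemma G1_real [IsProbabilityMeasure (P 0)] {mK : ℕ → ℝ} {v : (Fin d → ℤ) → ℝ} (h : G1 P S mK v) (K j : ℕ) :
    Tendsto (fun n : ℕ => (n : ℝ) ^ (d + 1) *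
    (P 0).real {ω | 1 / ((j : ℝ) + 1) * n ≤ |AA S (fun x => min (v x) K) n ω - mK K * n|}) atTop (nhds 0) := by
  have := (ENNReal.tendsto_toReal ENNReal.zero_ne_top).comp (h K j)
  refine this.congr fun n => ?_
  simp only [Function.comp, ENNReal.toReal_mul, ENNReal.toReal_ofReal (show (0:ℝ) ≤ (n:ℝ)^(d+1) by positivity)]
  rfl

lemma TL (hd : 1 ≤ d) (hS : IsCTSRW (d + 1) P S) {v : (Fin d → ℤ) → ℝ} (hv : ∀ x, 0 ≤ v x)
    {mK : ℕ → ℝ} {m : ℝ} (hmt : Tendsto mK atTop (nhds m)) (h1 : G1 P S mK v) (h2 : G2 v)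
    {a : ℝ} (ha : a < m) :
    Tendsto (fun t : ℝ => √t ^ (d + 1) * (P 0).real {ω | AA S v t ω < a * t}) atTop (nhds 0) := by
  have := hS.prob 0
  obtain ⟨b, hab, hbm⟩ := exists_between ha
  obtain ⟨K, hK⟩ := (hmt.eventually_const_lt hbm).exists
  obtain ⟨j, hj⟩ := exists_nat_one_div_lt (sub_pos.mpr hK)
  have hlim : Tendsto (fun t : ℝ => 2 ^ (d + 1) * ((⌊t⌋₊ : ℝ) ^ (d + 1) *
      (P 0).real {ω | 1 / ((j : ℝ) + 1) * ⌊t⌋₊ ≤ |AA S (fun x => min (v x) K) ⌊t⌋₊ ω - mK K * ⌊t⌋₊|}))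
      atTop (nhds 0) := by
    have := ((G1_real h1 K j).comp (tendsto_nat_floor_atTop (α := ℝ))).const_mul (2 ^ (d + 1))
    simpa using this
  have hfl : ∀ᶠ t : ℝ in atTop, a * t ≤ b * ⌊t⌋₊ := by
    have h : Tendsto (fun t : ℝ => b * ((⌊t⌋₊ : ℝ) / t)) atTop (nhds (b * 1)) :=
      tendsto_nat_floor_div_atTop.const_mul b
    rw [mul_one] at h
    filter_upwards [h.eventually_const_lt hab, eventually_gt_atTop 0] with t ht ht0
    have : a * t < b * (⌊t⌋₊ / t) * t := by gcongr
    rw [mul_assoc, div_mul_cancel₀ _ ht0.ne'] at this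
    exact this.le
  refine squeeze_zero' (Eventually.of_forall fun t => by positivity) ?_ hlim
  filter_upwards [hfl, eventually_ge_atTop 1] with t ht ht1
  have hn1 : (1 : ℝ) ≤ ⌊t⌋₊ := by
    exact_mod_cast Nat.le_floor (by simpa using ht1)
  have hn2 : t < ⌊t⌋₊ + 1 := Nat.lt_floor_add_one t
  have hn3 : (⌊t⌋₊ : ℝ) ≤ t := Nat.floor_le (by linarith)
  rw [← mul_assoc, ← mul_pow]
  have hsq : √t ≤ 2 * ⌊t⌋₊ := by
    rw [Real.sqrt_le_left (by positivity)]
    nlinarith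
  refine mul_le_mul (pow_le_pow_left₀ (Real.sqrt_nonneg _) hsq _) ?_ measureReal_nonneg (by positivity)
  refine ENNReal.toReal_mono (by simp) (measure_mono_ae ?_)
  filter_upwards [int_as hd hS hv h2] with ω hω hlt
  change AA S v t ω < a * t at hlt
  change 1 / ((j : ℝ) + 1) * ⌊t⌋₊ ≤ |AA S (fun x => min (v x) K) ⌊t⌋₊ ω - mK K * ⌊t⌋₊|
  have hl := AA_lower hS hv (hω t) hn3 K
  refine le_trans ?_ (neg_le_abs _)
  have : 1 / ((j : ℝ) + 1) * ⌊t⌋₊ ≤ (mK K - b) * ⌊t⌋₊ := by gcongr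
  linarith

lemma TU (hd : 1 ≤ d) (hS : IsCTSRW (d + 1) P S) {v : (Fin d → ℤ) → ℝ} (hv : ∀ x, 0 ≤ v x)
    {mK : ℕ → ℝ} {m : ℝ} (hmt : ∀ K, mK K ≤ m) (hm0 : 0 < m) (h1 : G1 P S mK v) (h2 : G2 v)
    {a : ℝ} (ha : m < a) :
    Tendsto (fun t : ℝ => √t ^ d * (P 0).real {ω | Yp S t ω = 0 ∧ a * t < AA S v t ω}) atTop (nhds 0) := by
  have := hS.prob 0
  obtain ⟨b, hmb, hba⟩ := exists_between ha
  obtain ⟨j, hj⟩ := exists_nat_one_div_lt (sub_pos.mpr hmb)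
  set c : ℝ := (4 * Real.pi) ^ (-(1 / 2) : ℝ) with hc
  have hrho : Tendsto (fun t : ℝ => √t ^ d * kk (t / 2) 0 ^ d) atTop (nhds ((√2 * c) ^ d)) := by
    have h := ((kk_asymp.comp (tendsto_id.atTop_div_const (zero_lt_two (α := ℝ)))).const_mul √2).pow d
    refine h.congr' ?_
    filter_upwards [eventually_ge_atTop 0] with t ht
    simp only [Function.comp, id]
    rw [← mul_assoc, ← Real.sqrt_mul (by norm_num), mul_div_cancel₀ _ (by norm_num), mul_pow]
  have hfl : ∀ᶠ t : ℝ in atTop, (m + 1 / ((j : ℝ) + 1)) * ⌈t⌉₊ ≤ b * t := by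
    have h : Tendsto (fun t : ℝ => (m + 1 / ((j : ℝ) + 1)) * ((⌈t⌉₊ : ℝ) / t)) atTop
        (nhds ((m + 1 / ((j : ℝ) + 1)) * 1)) :=
      tendsto_nat_ceil_div_atTop.const_mul _
    rw [mul_one] at h
    filter_upwards [h.eventually_lt_const (show m + 1 / ((j : ℝ) + 1) < b by linarith),
      eventually_gt_atTop 0] with t ht ht0
    have : (m + 1 / ((j : ℝ) + 1)) * (⌈t⌉₊ / t) * t < b * t := by gcongr
    rw [mul_assoc, div_mul_cancel₀ _ ht0.ne'] at this
    exact this.le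
  -- main estimate
  have main : ∀ i : ℕ, ∀ᶠ t : ℝ in atTop,
      √t ^ d * (P 0).real {ω | Yp S t ω = 0 ∧ a * t < AA S v t ω} ≤
        1 / ((i : ℝ) + 1) + ((√2 * c) ^ d + 1) * (4 / (a - b)) * (1 / ((i : ℝ) + 1)) := by
    intro i
    obtain ⟨K, hK⟩ := h2 i
    have hlim : Tendsto (fun t : ℝ => ((⌈t⌉₊ : ℝ) ^ (d + 1) *
      (P 0).real {ω | 1 / ((j : ℝ) + 1) * ⌈t⌉₊ ≤ |AA S (fun x => min (v x) K) ⌈t⌉₊ ω - mK K * ⌈t⌉₊|}))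
      atTop (nhds 0) := (G1_real h1 K j).comp (tendsto_nat_ceil_atTop (α := ℝ))
    have hip : (0 : ℝ) < 1 / ((i : ℝ) + 1) := by positivity
    filter_upwards [hfl, eventually_ge_atTop 1, hlim.eventually_lt_const hip,
      hrho.eventually_lt_const (lt_add_one _)] with t ht ht1 hl hr
    have hn1 : t ≤ ⌈t⌉₊ := Nat.le_ceil t
    have hn2 : (⌈t⌉₊ : ℝ) < t + 1 := Nat.ceil_lt_add_one (by linarith)
    set E1 : Set Ωw := {ω | 1 / ((j : ℝ) + 1) * ⌈t⌉₊ ≤ |AA S (fun x => min (v x) K) ⌈t⌉₊ ω - mK K * ⌈t⌉₊|}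
      with hE1
    set B : Ωw → ENNReal := fun ω => ∫⁻ u in Ioc 0 t, ENNReal.ofReal (v (Yp S u ω) - K) with hB
    have hBm : Measurable B :=
      Measurable.lintegral_prod_left' (f := fun p : ℝ × Ωw => ENNReal.ofReal (v (Yp S p.1 p.2) - K))
        (wY_meas hS (fun x => ENNReal.ofReal (v x - K)))
    set E2 : Set Ωw := {ω | ENNReal.ofReal ((a - b) * t) ≤ B ω} ∩ {ω | Yp S t ω = 0} with hE2
    have hab : 0 < (a - b) * t := mul_pos (by linarith) (by linarith)
    have hsub : (P 0).real {ω | Yp S t ω = 0 ∧ a * t < AA S v t ω} ≤ (P 0).real E1 + (P 0).real E2 := by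
      refine le_trans ?_ (measureReal_union_le E1 E2)
      refine ENNReal.toReal_mono (by simp) (measure_mono_ae ?_)
      filter_upwards [int_as hd hS hv h2] with ω hω hlt
      obtain ⟨hY, hlt⟩ : Yp S t ω = 0 ∧ a * t < AA S v t ω := hlt
      by_cases h : ω ∈ E1
      · exact Or.inl h
      · refine Or.inr ⟨?_, hY⟩
        change ENNReal.ofReal ((a - b) * t) ≤ B ω
        have hu := AA_upper hS hv (hω t) hn1 K
        have h' : |AA S (fun x => min (v x) K) ⌈t⌉₊ ω - mK K * ⌈t⌉₊| < 1 / ((j : ℝ) + 1) * ⌈t⌉₊ := not_le.mp h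
        have h'' := (abs_lt.mp h').2
        have h3 : mK K * ⌈t⌉₊ ≤ m * ⌈t⌉₊ := by gcongr; exact hmt K
        refine ENNReal.ofReal_le_of_le_toReal ?_
        change AA S v t ω ≤ _ + (B ω).toReal at hu
        linarith
    have hE2b : (P 0).real E2 ≤ kk (t / 2) 0 ^ d * (4 / (a - b)) * (1 / ((i : ℝ) + 1)) := by
      have hk : 0 ≤ kk (t / 2) 0 := kk_nonneg (by linarith) 0
      have hmk := mul_meas_ge_le_lintegral (μ := (P 0).restrict {ω | Yp S t ω = 0}) hBm
        (ENNReal.ofReal ((a - b) * t))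
      rw [Measure.restrict_apply (measurableSet_le measurable_const hBm)] at hmk
      have hbr := bridge hd hS (fun x => ENNReal.ofReal (v x - K)) (by linarith : 0 ≤ t) hn1
      have h5 : ENNReal.ofReal ((a - b) * t) * P 0 E2 ≤
          2 * ENNReal.ofReal (kk (t / 2) 0 ^ d) * (⌈t⌉₊ * ENNReal.ofReal (1 / ((i : ℝ) + 1))) :=
        hmk.trans (hbr.trans (mul_le_mul_right (hK ⌈t⌉₊) _))
      have h6 := ENNReal.toReal_mono (by
        refine ENNReal.mul_ne_top (ENNReal.mul_ne_top (by simp) (by simp)) (ENNReal.mul_ne_top (by simp) (by simp))) h5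
      simp only [ENNReal.toReal_mul, ENNReal.toReal_ofReal hab.le, ENNReal.toReal_ofReal hip.le,
        ENNReal.toReal_ofReal (pow_nonneg hk d), ENNReal.toReal_ofNat, ENNReal.toReal_natCast] at h6
      change (a - b) * t * (P 0).real E2 ≤ _ at h6
      have h7 : (a - b) * t * (P 0).real E2 ≤ 2 * kk (t / 2) 0 ^ d * (2 * t * (1 / ((i : ℝ) + 1))) := by
        refine h6.trans ?_
        gcongr
        linarith
      rw [← mul_le_mul_iff_of_pos_left hab]
      refine h7.trans (le_of_eq ?_)
      have : a - b ≠ 0 := by linarith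
      field_simp
      ring
    have hsq : √t ^ d ≤ (⌈t⌉₊ : ℝ) ^ (d + 1) := by
      have hs1 : 1 ≤ √t := Real.one_le_sqrt.mpr ht1
      calc √t ^ d ≤ √t ^ (d + 1) := pow_le_pow_right₀ hs1 (Nat.le_succ d)
        _ ≤ _ := by
          refine pow_le_pow_left₀ (Real.sqrt_nonneg _) (le_trans ?_ hn1) _
          rw [Real.sqrt_le_left (by linarith)]
          nlinarith
    calc _ ≤ √t ^ d * ((P 0).real E1 + (P 0).real E2) := by gcongr
      _ = √t ^ d * (P 0).real E1 + √t ^ d * (P 0).real E2 := mul_add _ _ _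
      _ ≤ (⌈t⌉₊ : ℝ) ^ (d + 1) * (P 0).real E1 +
          √t ^ d * (kk (t / 2) 0 ^ d * (4 / (a - b)) * (1 / ((i : ℝ) + 1))) := by gcongr
      _ = (⌈t⌉₊ : ℝ) ^ (d + 1) * (P 0).real E1 +
          (√t ^ d * kk (t / 2) 0 ^ d) * (4 / (a - b)) * (1 / ((i : ℝ) + 1)) := by ring
      _ ≤ _ := by
          have : 0 < 4 / (a - b) := div_pos (by norm_num) (by linarith)
          gcongr
  have hz : Tendsto (fun i : ℕ => 1 / ((i : ℝ) + 1) +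
      ((√2 * c) ^ d + 1) * (4 / (a - b)) * (1 / ((i : ℝ) + 1))) atTop (nhds 0) := by
    have h := tendsto_one_div_add_atTop_nhds_zero_nat (𝕜 := ℝ)
    simpa using h.add (h.const_mul (((√2 * c) ^ d + 1) * (4 / (a - b))))
  rw [tendsto_order]
  constructor
  · intro y hy
    exact Eventually.of_forall fun t => lt_of_lt_of_le hy (by positivity)
  · intro y hy
    obtain ⟨i, hi⟩ := (hz.eventually_lt_const hy).exists
    filter_upwards [main i] with t ht
    exact lt_of_le_of_lt ht hi

end quenched

open MeasureTheory ProbabilityTheory Filter Set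

section final
variable {d : ℕ} {α : ℝ} {Ωz Ωw : Type*} [MeasurableSpace Ωz] [MeasurableSpace Ωw] {μ : Measure Ωz}
  {z : (Fin d → ℤ) → Ωz → ℝ}
  {P : (Fin (d + 1) → ℤ) → Measure Ωw} {S : ℝ → Ωw → (Fin (d + 1) → ℤ)}

lemma kk_scale {a : ℝ} (ha : 0 < a) : Tendsto (fun t : ℝ => √t * kk (a * t) 0) atTop
    (nhds ((4 * Real.pi) ^ (-(1 / 2) : ℝ) * (√a)⁻¹)) := by
  have h := (kk_asymp.comp (tendsto_id.const_mul_atTop ha)).mul_const (√a)⁻¹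
  refine h.congr fun t => ?_
  have : √a ≠ 0 := (Real.sqrt_pos.mpr ha).ne'
  simp only [Function.comp, id]
  rw [Real.sqrt_mul ha.le]
  field_simp

lemma quenched_limit (hd : 1 ≤ d) (hS : IsCTSRW (d + 1) P S) {v : (Fin d → ℤ) → ℝ} (hv : ∀ x, 0 ≤ v x)
    {mK : ℕ → ℝ} {m : ℝ} (hmt : Tendsto mK atTop (nhds m)) (hmle : ∀ K, mK K ≤ m) (hm0 : 0 < m)
    (h1 : G1 P S mK v) (h2 : G2 v) :
    Tendsto (fun t : ℝ => √t ^ (d + 1) * (P 0).real {ω | Yp S t ω = 0 ∧ S (AA S v t ω) ω 0 = 0}) atTop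
      (nhds (((4 * Real.pi) ^ (-(1 / 2) : ℝ)) ^ (d + 1) * (√m)⁻¹)) := by
  have := hS.prob 0
  set c : ℝ := (4 * Real.pi) ^ (-(1 / 2) : ℝ) with hc
  have hcont : ContinuousAt (fun a : ℝ => c * (√a)⁻¹ * c ^ d) m := by
    refine ContinuousAt.mul (ContinuousAt.mul continuousAt_const ?_) continuousAt_const
    exact Real.continuous_sqrt.continuousAt.inv₀ (Real.sqrt_pos.mpr hm0).ne'
  have hval : c ^ (d + 1) * (√m)⁻¹ = c * (√m)⁻¹ * c ^ d := by ring
  have hdens : Tendsto (fun t : ℝ => (√t * kk t 0) ^ d) atTop (nhds (c ^ d)) := kk_asymp.pow d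
  have hform : ∀ t : ℝ, 0 ≤ t → (P 0).real {ω | Yp S t ω = 0 ∧ S (AA S v t ω) ω 0 = 0} =
      (∫⁻ ω in {ω | Yp S t ω = 0}, ENNReal.ofReal (kk (AA S v t ω) 0) ∂(P 0)).toReal := by
    intro t ht
    rw [Measure.real, layered_formula hd hS hv ht]
  have hD : ∀ t, MeasurableSet {ω | Yp S t ω = 0} := fun t => (Y_meas hS t) (measurableSet_singleton 0)
  have hDp : ∀ t : ℝ, 0 ≤ t → (P 0).real {ω | Yp S t ω = 0} = kk t 0 ^ d := by
    intro t ht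
    rw [Measure.real, Y_law_one hd hS ht, pE_diag hd ht, ENNReal.toReal_ofReal (pow_nonneg (kk_nonneg ht 0) d)]
  have hkA : ∀ t ω, kk (AA S v t ω) 0 ≤ 1 := fun t ω => kk_le_one (AA_nonneg hv t ω) 0
  have hfin : ∀ t, ∫⁻ ω in {ω | Yp S t ω = 0}, ENNReal.ofReal (kk (AA S v t ω) 0) ∂(P 0) ≠ ⊤ := by
    intro t
    refine ne_top_of_le_ne_top (b := ∫⁻ ω in {ω | Yp S t ω = 0}, 1 ∂(P 0)) (by simp) (lintegral_mono fun ω => ?_)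
    exact ENNReal.ofReal_le_one.mpr (hkA t ω)
  -- upper bound
  have hup : ∀ a t : ℝ, 0 ≤ a → 0 ≤ t → (P 0).real {ω | Yp S t ω = 0 ∧ S (AA S v t ω) ω 0 = 0} ≤
      kk (a * t) 0 * kk t 0 ^ d + (P 0).real {ω | AA S v t ω < a * t} := by
    intro a t ha ht
    have hk : 0 ≤ kk (a * t) 0 := kk_nonneg (by positivity) 0
    have hE : MeasurableSet {ω | AA S v t ω < a * t} := measurableSet_lt (AA_meas hS v t) measurable_const
    have hb : ∫⁻ ω in {ω | Yp S t ω = 0}, ENNReal.ofReal (kk (AA S v t ω) 0) ∂(P 0) ≤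
        ENNReal.ofReal (kk (a * t) 0) * P 0 {ω | Yp S t ω = 0} + P 0 {ω | AA S v t ω < a * t} := by
      calc _ ≤ ∫⁻ ω in {ω | Yp S t ω = 0}, (ENNReal.ofReal (kk (a * t) 0) +
            {ω | AA S v t ω < a * t}.indicator 1 ω) ∂(P 0) := by
            refine lintegral_mono fun ω => ?_
            by_cases h : AA S v t ω < a * t
            · rw [Set.indicator_of_mem (s := {ω | AA S v t ω < a * t}) h]
              exact (ENNReal.ofReal_le_one.mpr (hkA t ω)).trans le_add_self
            · refine le_trans (ENNReal.ofReal_le_ofReal ?_) le_self_add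
              exact kk_anti (not_lt.mp h)
        _ = ENNReal.ofReal (kk (a * t) 0) * P 0 {ω | Yp S t ω = 0} +
            (P 0).restrict {ω | Yp S t ω = 0} {ω | AA S v t ω < a * t} := by
            rw [lintegral_add_left measurable_const, lintegral_indicator_one hE, setLIntegral_const]
        _ ≤ _ := by
            exact add_le_add le_rfl (Measure.restrict_apply_le _ _)
    have h3 := ENNReal.toReal_mono (ENNReal.add_ne_top.mpr ⟨ENNReal.mul_ne_top (by simp) (by simp), by simp⟩) hb
    rw [ENNReal.toReal_add (ENNReal.mul_ne_top (by simp) (by simp)) (by simp), ENNReal.toReal_mul,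
      ENNReal.toReal_ofReal hk] at h3
    rw [hform t ht, ← hDp t ht]
    exact h3
  -- lower bound
  have hlow : ∀ a t : ℝ, 0 ≤ a → 0 ≤ t →
      kk (a * t) 0 * (kk t 0 ^ d - (P 0).real {ω | Yp S t ω = 0 ∧ a * t < AA S v t ω}) ≤
      (P 0).real {ω | Yp S t ω = 0 ∧ S (AA S v t ω) ω 0 = 0} := by
    intro a t ha ht
    have hk : 0 ≤ kk (a * t) 0 := kk_nonneg (by positivity) 0
    set E : Set Ωw := {ω | Yp S t ω = 0} \ {ω | Yp S t ω = 0 ∧ a * t < AA S v t ω} with hE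
    have hEm : MeasurableSet {ω | Yp S t ω = 0 ∧ a * t < AA S v t ω} :=
      (hD t).inter (measurableSet_lt measurable_const (AA_meas hS v t))
    have hr : (P 0).real E = kk t 0 ^ d - (P 0).real {ω | Yp S t ω = 0 ∧ a * t < AA S v t ω} := by
      have hsub : {ω | Yp S t ω = 0 ∧ a * t < AA S v t ω} ⊆ {ω | Yp S t ω = 0} := fun ω hω => hω.1
      rw [hE, measureReal_sdiff hsub hEm, hDp t ht]
    have hb : ENNReal.ofReal (kk (a * t) 0) * P 0 E ≤
        ∫⁻ ω in {ω | Yp S t ω = 0}, ENNReal.ofReal (kk (AA S v t ω) 0) ∂(P 0) := by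
      rw [← setLIntegral_const]
      refine (setLIntegral_mono' ((hD t).diff hEm) fun ω hω => ?_).trans
        (lintegral_mono_set sdiff_subset)
      refine ENNReal.ofReal_le_ofReal (kk_anti ?_)
      by_contra hcon
      exact hω.2 ⟨hω.1, not_le.mp hcon⟩
    have h3 := ENNReal.toReal_mono (hfin t) hb
    rw [ENNReal.toReal_mul, ENNReal.toReal_ofReal hk] at h3
    rw [hform t ht, ← hr]
    exact h3
  rw [hval, tendsto_order]
  constructor
  · intro y hy
    have hev := (hcont.eventually_const_lt hy).filter_mono (nhdsWithin_le_nhds (s := Ioi m))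
    obtain ⟨a, hay, ham⟩ := (hev.and self_mem_nhdsWithin).exists
    have ham' : m < a := ham
    have hlim := (kk_scale (hm0.trans ham')).mul (hdens.sub (TU hd hS hv hmle hm0 h1 h2 ham'))
    rw [sub_zero] at hlim
    filter_upwards [hlim.eventually_const_lt hay, eventually_ge_atTop 0] with t ht ht0
    refine lt_of_lt_of_le ht ?_
    refine le_trans (le_of_eq ?_) (mul_le_mul_of_nonneg_left (hlow a t (by linarith) ht0)
      (show 0 ≤ √t ^ (d + 1) by positivity))
    ring
  · intro y hy
    have hev := (hcont.eventually_lt_const hy).filter_mono (nhdsWithin_le_nhds (s := Iio m))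
    obtain ⟨a, ⟨hay, ham⟩, ha0⟩ := ((hev.and self_mem_nhdsWithin).and
      (nhdsWithin_le_nhds (lt_mem_nhds hm0))).exists
    have ham' : a < m := ham
    have hlim := ((kk_scale ha0).mul hdens).add (TL hd hS hv hmt h1 h2 ham')
    rw [add_zero] at hlim
    filter_upwards [hlim.eventually_lt_const hay, eventually_ge_atTop 0] with t ht ht0
    refine lt_of_le_of_lt ?_ ht
    refine le_trans (mul_le_mul_of_nonneg_left (hup a t ha0.le ht0)
      (show 0 ≤ √t ^ (d + 1) by positivity)) (le_of_eq ?_)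
    ring

lemma mean_pos (hα : 0 < α) (hz : IsScenery d α μ z) (hint : Integrable (z 0) μ) : 0 < ∫ ζ, z 0 ζ ∂μ := by
  rw [integral_pos_iff_support_of_nonneg (hz.nonneg 0) hint, pos_iff_ne_zero]
  intro h0
  have h := hz.tail
  have h1 : Tendsto (fun _ : ℝ => (0 : ℝ)) atTop (nhds (-α)) := by
    refine h.congr' ?_
    filter_upwards [eventually_gt_atTop 0] with r hr
    have : μ {ω | r < z 0 ω} = 0 := by
      refine measure_mono_null ?_ h0
      intro ω hω
      exact (hr.trans hω).ne'
    simp [this]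
  have := tendsto_nhds_unique h1 tendsto_const_nhds
  linarith

lemma good_as (hd : 1 ≤ d) (hS : IsCTSRW (d + 1) P S) (hz : IsScenery d α μ z) (hint : Integrable (z 0) μ) :
    ∀ᵐ ζ ∂μ, G1 P S (fun K : ℕ => ∫ ζ', min (z 0 ζ') K ∂μ) (fun x => z x ζ) ∧ G2 (fun x => z x ζ) := by
  have := hz.prob
  have hA : ∀ K j : ℕ, ∀ᵐ ζ ∂μ, Tendsto (fun n : ℕ => ENNReal.ofReal ((n : ℝ) ^ (d + 1)) *
    P 0 {ω | 1 / ((j : ℝ) + 1) * n ≤ |AA S (fun x => min (z x ζ) K) n ω - (∫ ζ', min (z 0 ζ') K ∂μ) * n|})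
      atTop (nhds 0) := by
    intro K j
    have hmin : Measurable (fun r : ℝ => min r (K : ℝ)) := by fun_prop
    have := conc_as hd hS (w := fun x ζ => min (z x ζ) K) (fun x => hmin.comp (hz.meas x))
      (hz.indep.comp (fun _ r => min r (K : ℝ)) fun _ => hmin) (K := K)
      (fun x ζ => ⟨le_min (hz.nonneg x ζ) (Nat.cast_nonneg K), min_le_right _ _⟩)
      (m := ∫ ζ', min (z 0 ζ') K ∂μ) (fun x => ((hz.ident x).comp hmin).integral_eq)
      (ε := 1 / ((j : ℝ) + 1)) (by positivity) (d + 1)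
    filter_upwards [this] with ζ hζ
    rw [← tendsto_add_atTop_iff_nat 1]
    refine hζ.congr fun n => ?_
    push_cast
    rfl
  have hB : ∀ j : ℕ, ∀ᵐ ζ ∂μ, ∃ K : ℕ, ∀ n : ℕ, ∑' x, rN d n 0 x * ENNReal.ofReal (z x ζ - K) ≤
      n * ENNReal.ofReal (1 / ((j : ℝ) + 1)) := by
    intro j
    refine max_as hd hS hz hint ?_ (by simp)
    rw [Ne, ENNReal.ofReal_eq_zero, not_le]
    positivity
  filter_upwards [ae_all_iff.mpr fun K => ae_all_iff.mpr (hA K), ae_all_iff.mpr hB] with ζ h1 h2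
  exact ⟨h1, h2⟩

lemma mK_tendsto (hz : IsScenery d α μ z) (hint : Integrable (z 0) μ) :
    Tendsto (fun K : ℕ => ∫ ζ', min (z 0 ζ') K ∂μ) atTop (nhds (∫ ζ', z 0 ζ' ∂μ)) := by
  refine tendsto_integral_of_dominated_convergence (fun ζ => z 0 ζ) ?_ hint ?_ ?_
  · intro K
    exact ((hz.meas 0).min measurable_const).aestronglyMeasurable
  · intro K
    refine Eventually.of_forall fun ζ => ?_
    rw [Real.norm_of_nonneg (le_min (hz.nonneg 0 ζ) (Nat.cast_nonneg K))]
    exact min_le_left _ _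
  · refine Eventually.of_forall fun ζ => ?_
    refine tendsto_const_nhds.congr' ?_
    filter_upwards [eventually_ge_atTop ⌈z 0 ζ⌉₊] with K hK
    exact (min_eq_left (Nat.le_of_ceil_le hK)).symm

lemma mK_le (hz : IsScenery d α μ z) (hint : Integrable (z 0) μ) (K : ℕ) :
    ∫ ζ', min (z 0 ζ') K ∂μ ≤ ∫ ζ', z 0 ζ' ∂μ := by
  refine integral_mono_of_nonneg (Eventually.of_forall fun ζ => ?_) hint
    (Eventually.of_forall fun ζ => min_le_left _ _)
  exact le_min (hz.nonneg 0 ζ) (Nat.cast_nonneg K)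

end final

open MeasureTheory ProbabilityTheory Filter Set
/-- Theorem (on-diagonal heat kernel, finite-mean case): if `𝔼[z(0)] < ∞` then ℙ-a.s.
`P₀^ω(X_t = 0) = ((4π)^{-(d+1)/2} 𝔼[z(0)]^{-1/2} + o(1)) t^{-(1+d)/2}` as `t → ∞`. -/
theorem stmt6 (d : ℕ) (hd : 1 ≤ d) (α : ℝ) (hα : 0 < α)
    {Ωz Ωw : Type*} [MeasurableSpace Ωz] [MeasurableSpace Ωw]
    (μ : Measure Ωz) (z : (Fin d → ℤ) → Ωz → ℝ) (hz : IsScenery d α μ z)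
    (hint : Integrable (z 0) μ)
    (P : (Fin (d + 1) → ℤ) → Measure Ωw) (S : ℝ → Ωw → (Fin (d + 1) → ℤ))
    (hS : IsCTSRW (d + 1) P S) :
    ∀ᵐ ζ ∂ μ, Tendsto
      (fun t : ℝ =>
        ((P 0) {ω | layeredWalk d z S t ζ ω = 0}).toReal / t ^ (-((1 + d : ℝ) / 2)))
      atTop
      (nhds ((4 * Real.pi) ^ (-((d + 1 : ℝ) / 2)) * (∫ ζ', z 0 ζ' ∂ μ) ^ (-(1 / 2) : ℝ))) := by
  have hm0 := mean_pos hα hz hint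
  filter_upwards [good_as hd hS hz hint] with ζ hζ
  have h := quenched_limit hd hS (fun x => hz.nonneg x ζ) (mK_tendsto hz hint) (mK_le hz hint) hm0 hζ.1 hζ.2
  have hc : ((4 * Real.pi) ^ (-(1 / 2) : ℝ)) ^ (d + 1) * (√(∫ ζ', z 0 ζ' ∂ μ))⁻¹ =
      (4 * Real.pi) ^ (-((d + 1 : ℝ) / 2)) * (∫ ζ', z 0 ζ' ∂ μ) ^ (-(1 / 2) : ℝ) := by
    rw [← Real.rpow_natCast, ← Real.rpow_mul (by positivity), Real.rpow_neg hm0.le, Real.sqrt_eq_rpow]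
    congr 2
    push_cast
    ring
  rw [← hc]
  refine h.congr' ?_
  filter_upwards [eventually_gt_atTop 0] with t ht
  have e1 : {ω | layeredWalk d z S t ζ ω = 0} =
      {ω | Yp S t ω = 0 ∧ S (AA S (fun x => z x ζ) t ω) ω 0 = 0} := by
    ext ω
    change ((S (AA S (fun x => z x ζ) t ω) ω 0, Yp S t ω) : ℤ × (Fin d → ℤ)) = 0 ↔ _
    rw [Prod.ext_iff]
    exact and_comm
  have e2 : √t ^ (d + 1) = t ^ ((1 + d : ℝ) / 2) := by
    rw [Real.sqrt_eq_rpow, ← Real.rpow_natCast, ← Real.rpow_mul ht.le]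
    congr 1
    push_cast
    ring
  rw [e1, e2, Real.rpow_neg ht.le, div_inv_eq_mul, mul_comm]
  rfl
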